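/- Let n be a positive integer with 3-adic expansion n = Σ_{k=1}^t a_k·3^{n_k}, where n_1 > n_2 > … > n_t ≥ 0 and a_k ∈ {1,2} for all k. Then there exists a bijection between Irr_{3'}(S_n) and the Cartesian product Irr_{3'}(S_{a_1·3^{n_1}}) × Irr_{3'}(S_{a_2·3^{n_2}}) × … × Irr_{3'}(S_{a_t·3^{n_t}}). -/

import Mathlib

open scoped Classical

noncomputable section

/-- The set of irreducible complex characters of a group `G`. -/
def Irr (G : Type) [Group G] : Set (G → ℂ) :=
  {χ | ∃ V : FDRep ℂ G, CategoryTheory.Simple V ∧ FDRep.character V = χ}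

/-- The set of irreducible complex characters of `G` whose degree is coprime to `p`. -/
def IrrCoprime (p : ℕ) (G : Type) [Group G] : Set (G → ℂ) :=
  {χ | ∃ V : FDRep ℂ G, CategoryTheory.Simple V ∧ FDRep.character V = χ ∧
    Nat.Coprime (Module.finrank ℂ V) p}


open Representation in
/-- The permutation representation on functions. -/
def permRep (G X : Type) [Group G] [MulAction G X] : Representation ℂ G (X → ℂ) where
  toFun g := LinearMap.funLeft ℂ ℂ (fun x => g⁻¹ • x)
  map_one' := by ext; simp [LinearMap.funLeft]
  map_mul' g h := by ext; simp [LinearMap.funLeft, mul_smul]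

lemma trace_permRep (G X : Type) [Group G] [MulAction G X] [Fintype X] (g : G) :
    LinearMap.trace ℂ (X → ℂ) (permRep G X g) = ((Finset.univ.filter (fun x : X => g • x = x)).card : ℂ) := by
  rw [LinearMap.trace_eq_matrix_trace ℂ (Pi.basisFun ℂ X), Matrix.trace]
  simp only [Matrix.diag, LinearMap.toMatrix_apply, permRep, Pi.basisFun_apply, Pi.basisFun_repr]
  simp only [MonoidHom.coe_mk, OneHom.coe_mk, LinearMap.funLeft_apply, Pi.single_apply]
  rw [Finset.sum_ite, Finset.sum_const_zero]
  simp only [inv_smul_eq_iff, Finset.sum_const, nsmul_eq_mul, mul_one, add_zero]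
  simp only [eq_comm]

lemma perm_integral (G X : Type) [Group G] [Fintype G] [MulAction G X] [Fintype X] (V : FDRep ℂ G) :
    ∃ m : ℕ, (Nat.card G : ℂ)⁻¹ * ∑ g : G,
      ((Finset.univ.filter (fun x : X => g • x = x)).card : ℂ) * V.character g⁻¹ = m := by
  have : Invertible (Nat.card G : ℂ) := invertibleOfNonzero (by simp)
  have := FDRep.scalar_product_char_eq_finrank_equivariant V (FDRep.of (permRep G X))
  refine ⟨_, Eq.trans ?_ this⟩
  congr 1
  refine Finset.sum_congr rfl fun g _ => ?_
  congr 1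
  exact (trace_permRep G X g).symm

lemma simple_of_irr {G W : Type} [Group G] [Fintype G] [AddCommGroup W] [Module ℂ W]
    [FiniteDimensional ℂ W] (ρ : Representation ℂ G W) [ρ.IsIrreducible] :
    CategoryTheory.Simple (FDRep.of ρ) := by
  have : Invertible (Nat.card G : ℂ) := invertibleOfNonzero (by simp)
  rw [FDRep.simple_iff_char_is_norm_one]
  have := Representation.char_orthonormal ρ ρ
  rw [if_pos ⟨Representation.Equiv.refl ρ⟩] at this
  have h2 : (∑ g : G, ρ.character g * ρ.character g⁻¹) = (Nat.card G : ℂ) := by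
    have h0 : (Nat.card G : ℂ) ≠ 0 := by simp
    field_simp at this
    simpa using this
  exact h2

lemma classfun_op_zero {G W : Type} [Group G] [Fintype G] [AddCommGroup W] [Module ℂ W]
    [FiniteDimensional ℂ W] (ρ : Representation ℂ G W) [ρ.IsIrreducible] (f : G → ℂ)
    (hf : ∀ g h, f (h * g * h⁻¹) = f g)
    (h0 : ∀ V : FDRep ℂ G, CategoryTheory.Simple V → ∑ g, f g * V.character g = 0) :
    ∑ g, f g • ρ g = 0 := by
  have hcomm : ∀ h : G, (∑ g, f g • ρ g) ∘ₗ ρ h = ρ h ∘ₗ (∑ g, f g • ρ g) := by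
    intro h
    rw [← Module.End.mul_eq_comp, ← Module.End.mul_eq_comp, Finset.sum_mul, Finset.mul_sum]
    rw [← Equiv.sum_comp (MulAut.conj h).toEquiv]
    refine Finset.sum_congr rfl fun g _ => ?_
    rw [smul_mul_assoc, mul_smul_comm]
    have : (MulAut.conj h).toEquiv g = h * g * h⁻¹ := rfl
    rw [this, hf]
    congr 1
    rw [← map_mul, ← map_mul]
    congr 1
    group
  let T : Representation.IntertwiningMap ρ ρ := ⟨∑ g, f g • ρ g, hcomm⟩
  obtain ⟨c, hc⟩ := (Representation.IsIrreducible.algebraMap_intertwiningMap_bijective_of_isAlgClosed (ρ := ρ)).2 T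
  have hT : ∑ g, f g • ρ g = c • LinearMap.id := by
    have := congrArg Representation.IntertwiningMap.toLinearMap hc
    rw [show (∑ g, f g • ρ g) = T.toLinearMap from rfl, ← this]
    ext; simp
  have htr := congrArg (LinearMap.trace ℂ W) hT
  have h1 := h0 (FDRep.of ρ) (simple_of_irr ρ)
  have h2 : LinearMap.trace ℂ W (∑ g, f g • ρ g) = 0 := by
    rw [map_sum]; simp only [map_smul]; exact h1
  rw [h2, map_smul, LinearMap.trace_id] at htr
  have : Nontrivial W := by
    have h := (Representation.irreducible_iff_isSimpleModule_asModule ρ).mp inferInstance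
    have := IsSimpleModule.nontrivial (MonoidAlgebra ℂ G) ρ.asModule
    exact ρ.asModuleEquiv.symm.toEquiv.nontrivial
  have h3 : (Module.finrank ℂ W : ℂ) ≠ 0 := by
    exact_mod_cast (Module.finrank_pos (R := ℂ) (M := W)).ne'
  have hc0 : c = 0 := by simpa [h3] using htr.symm
  rw [hT, hc0, zero_smul]


lemma classfun_eq_zero {G : Type} [Group G] [Fintype G] (f : G → ℂ)
    (hf : ∀ g h, f (h * g * h⁻¹) = f g)
    (h0 : ∀ V : FDRep ℂ G, CategoryTheory.Simple V → ∑ g, f g * V.character g = 0) :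
    f = 0 := by
  let z : MonoidAlgebra ℂ G := ∑ g, MonoidAlgebra.single g (f g)
  have hz : ∀ W : Submodule (MonoidAlgebra ℂ G) (MonoidAlgebra ℂ G),
      IsSimpleModule (MonoidAlgebra ℂ G) W → ∀ w ∈ W, z * w = 0 := by
    intro W hW w hw
    let ρ : Representation ℂ G W := Representation.ofModule' W
    have hact : ∀ (r : MonoidAlgebra ℂ G) (m : W), ρ.asAlgebraHom r m = r • m := by
      intro r m
      have : ρ.asAlgebraHom = Algebra.lsmul ℂ ℂ W := by
        simp [Representation.asAlgebraHom, ρ, Representation.ofModule']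
      rw [this]; rfl
    have hirr : ρ.IsIrreducible := by
      rw [Representation.irreducible_iff_isSimpleModule_asModule]
      let φ : ρ.asModule ≃ₗ[MonoidAlgebra ℂ G] W :=
        { ρ.asModuleEquiv.toAddEquiv with
          map_smul' := by
            intro r m
            have := Representation.asModuleEquiv_map_smul ρ r m
            rw [hact] at this
            exact this }
      exact IsSimpleModule.congr φ
    have hfin1 : FiniteDimensional ℂ (MonoidAlgebra ℂ G) :=
      Module.Finite.equiv (MonoidAlgebra.coeffLinearEquiv (M := G) ℂ).symm
    have hfin : FiniteDimensional ℂ W :=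
      FiniteDimensional.of_injective (W.subtype.restrictScalars ℂ) Subtype.val_injective
    have hop := classfun_op_zero ρ f hf h0
    have h1 : ρ.asAlgebraHom z = 0 := by
      rw [← hop]
      simp [z]
    have h2 := LinearMap.congr_fun h1 ⟨w, hw⟩
    rw [hact] at h2
    exact congrArg Subtype.val h2
  have hall : ∀ w : MonoidAlgebra ℂ G, z * w = 0 := by
    intro w
    have htop := IsSemisimpleModule.sSup_simples_eq_top (MonoidAlgebra ℂ G) (MonoidAlgebra ℂ G)
    have hw : w ∈ sSup {m : Submodule (MonoidAlgebra ℂ G) (MonoidAlgebra ℂ G) | IsSimpleModule (MonoidAlgebra ℂ G) m} := by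
      rw [htop]; trivial
    rw [sSup_eq_iSup'] at hw
    induction hw using Submodule.iSup_induction' with
    | mem i x hx => exact hz i.1 i.2 x hx
    | zero => simp
    | add x y _ _ hx hy => rw [mul_add, hx, hy, add_zero]
  have := hall 1
  rw [mul_one] at this
  funext g
  have h2 := congrArg (fun y => MonoidAlgebra.coeff y g) this
  simpa [z, Finsupp.single_apply] using h2

open MvPolynomial in
/-- Coefficient indexed by plain functions. -/
def cf {N : ℕ} (F : MvPolynomial (Fin N) ℤ) (b : Fin N → ℕ) : ℤ :=
  MvPolynomial.coeff (Finsupp.equivFunOnFinite.symm b) F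

/-- Sum `0 + 1 + ... + (N-1)`. -/
def triN (N : ℕ) : ℕ := ∑ i : Fin N, (i : ℕ)

lemma inj_sum_ge {N : ℕ} (b : Fin N → ℕ) (hb : Function.Injective b) : triN N ≤ ∑ i, b i := by
  have h1 : ∑ i, b i = ∑ x ∈ Finset.univ.image b, x := by
    rw [Finset.sum_image (fun x _ y _ h => hb h)]
  have hc : (Finset.univ.image b).card = N := by
    rw [Finset.card_image_of_injective _ hb]; simp
  rw [h1]
  set s := Finset.univ.image b
  have h2 : ∑ x ∈ s, x = ∑ i : Fin N, s.orderEmbOfFin hc i := by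
    rw [← Finset.sum_image (f := fun x => x) (g := fun i => s.orderEmbOfFin hc i)
      (fun x _ y _ h => (s.orderEmbOfFin hc).injective h)]
    congr 1
    ext x
    simp only [Finset.mem_image, Finset.mem_univ, true_and]
    have := Finset.range_orderEmbOfFin s hc
    rw [← Finset.mem_coe, ← this]; rfl
  rw [h2, triN]
  refine Finset.sum_le_sum fun i hiu => ?_
  have hmono : StrictMono (fun i : Fin N => s.orderEmbOfFin hc i) := (s.orderEmbOfFin hc).strictMono
  obtain ⟨i, hi⟩ := i
  induction i with
  | zero => simp
  | succ k ih =>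
    have := ih (by omega) (Finset.mem_univ _)
    have h3 := hmono (show (⟨k, by omega⟩ : Fin N) < ⟨k+1, hi⟩ by simp)
    simp only at h3 ⊢
    have h4 : k ≤ s.orderEmbOfFin hc ⟨k, by omega⟩ := this
    omega

lemma inj_small {N d : ℕ} (b : Fin N → ℕ) (hb : Function.Injective b) (hs : ∑ i, b i = d + triN N)
    (v : ℕ) (hv : v + d < N) : ∃ i, b i = v := by
  by_contra hne
  push Not at hne
  let b' : Fin N → ℕ := fun i => if b i < v then b i else b i - 1
  have hb' : Function.Injective b' := by
    intro i j hij
    apply hb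
    have h1 := hne i
    have h2 := hne j
    simp only [b'] at hij
    split_ifs at hij <;> omega
  have h1 := inj_sum_ge b' hb'
  have h2 : ∑ i, b i = ∑ i, b' i + ∑ i, (if b i < v then 0 else 1) := by
    rw [← Finset.sum_add_distrib]
    refine Finset.sum_congr rfl fun i _ => ?_
    have := hne i
    simp only [b']
    split_ifs <;> omega
  have h3 : (Finset.univ.filter (fun i => b i < v)).card ≤ v := by
    have : (Finset.univ.filter (fun i => b i < v)).card ≤ (Finset.range v).card :=
      Finset.card_le_card_of_injOn b (by intro i hi; simpa using hi) hb.injOn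
    simpa using this
  have h4 : ∑ i, (if b i < v then 0 else 1) = (Finset.univ.filter (fun i => ¬ b i < v)).card := by
    rw [Finset.card_filter]
    refine Finset.sum_congr rfl fun i _ => ?_
    split_ifs <;> simp
  have h5 := Finset.card_filter_add_card_filter_not (s := (Finset.univ : Finset (Fin N))) (fun i => b i < v)
  simp only [Finset.card_univ, Fintype.card_fin] at h5
  omega

/-- Alternating homogeneous polynomials of degree `d` above the Vandermonde. -/
structure Good {N : ℕ} (F : MvPolynomial (Fin N) ℤ) (d : ℕ) : Prop where
  alt : ∀ w : Equiv.Perm (Fin N), MvPolynomial.rename w F = ((Equiv.Perm.sign w : ℤ)) • F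
  hom : F.IsHomogeneous (d + triN N)

lemma Good.cf_comp {N d : ℕ} {F : MvPolynomial (Fin N) ℤ} (h : Good F d) (b : Fin N → ℕ)
    (w : Equiv.Perm (Fin N)) : cf F (b ∘ w) = (Equiv.Perm.sign w : ℤ) * cf F b := by
  have h1 := MvPolynomial.coeff_rename_mapDomain (w : Fin N → Fin N) w.injective F
    (Finsupp.equivFunOnFinite.symm (b ∘ w))
  have h2 : Finsupp.mapDomain w (Finsupp.equivFunOnFinite.symm (b ∘ w)) = Finsupp.equivFunOnFinite.symm b := by
    rw [← Finsupp.equivMapDomain_eq_mapDomain]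
    ext i; simp
  rw [h2, h.alt w, MvPolynomial.coeff_smul] at h1
  exact h1.symm

lemma Good.inj {N d : ℕ} {F : MvPolynomial (Fin N) ℤ} (h : Good F d) {b : Fin N → ℕ}
    (hb : cf F b ≠ 0) : Function.Injective b := by
  intro i j hij
  by_contra hne
  have h1 := h.cf_comp b (Equiv.swap i j)
  have h2 : b ∘ Equiv.swap i j = b := by
    funext x
    simp only [Function.comp]
    by_cases hx : x = i
    · subst hx; simp [hij]
    by_cases hx' : x = j
    · subst hx'; simp [hij]
    rw [Equiv.swap_apply_of_ne_of_ne hx hx']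
  rw [h2, Equiv.Perm.sign_swap hne] at h1
  push_cast at h1
  omega

lemma Good.deg {N d : ℕ} {F : MvPolynomial (Fin N) ℤ} (h : Good F d) {b : Fin N → ℕ}
    (hb : cf F b ≠ 0) : ∑ i, b i = d + triN N := by
  have := h.hom hb
  rw [← this, Finsupp.weight_apply, Finsupp.sum_fintype _ _ (by simp)]
  simp

lemma Good.cancel {N d : ℕ} {F : MvPolynomial (Fin N) ℤ} (h : Good F d) {b : Fin N → ℕ}
    (hb : ¬ Function.Injective b) (P : ℕ → Prop) (u : ℕ → ℕ) :
    ∑ i, (if P (b i) then cf F (Function.update b i (u (b i))) else 0) = 0 := by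
  simp only [Function.Injective] at hb
  push Not at hb
  obtain ⟨x, y, hxy, hne⟩ := hb
  rw [Fintype.sum_eq_add x y hne]
  · rw [hxy]
    have h1 := h.cf_comp (Function.update b x (u (b y))) (Equiv.swap x y)
    have h2 : Function.update b x (u (b y)) ∘ Equiv.swap x y = Function.update b y (u (b y)) := by
      funext z
      simp only [Function.comp]
      by_cases hx : z = x
      · subst hx; rw [Equiv.swap_apply_left, Function.update_of_ne hne.symm, Function.update_of_ne hne, hxy]
      by_cases hx' : z = y
      · subst hx'; rw [Equiv.swap_apply_right, Function.update_self, Function.update_self]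
      rw [Equiv.swap_apply_of_ne_of_ne hx hx', Function.update_of_ne hx, Function.update_of_ne hx']
    rw [h2, Equiv.Perm.sign_swap hne] at h1
    push_cast at h1
    split_ifs <;> omega
  · rintro z ⟨hzx, hzy⟩
    split_ifs
    · by_contra hcon
      have := h.inj hcon
      apply hne
      apply this
      rw [Function.update_of_ne (Ne.symm hzx), Function.update_of_ne (Ne.symm hzy), hxy]
    · rfl

/-- Adjoint of multiplication by a power sum. -/
def pd {N : ℕ} (k : ℕ) (F : MvPolynomial (Fin N) ℤ) : MvPolynomial (Fin N) ℤ :=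
  ∑ i, MvPolynomial.divMonomial F (Finsupp.single i k)

lemma cf_ext {N : ℕ} {F G : MvPolynomial (Fin N) ℤ} (h : ∀ b, cf F b = cf G b) : F = G := by
  ext m
  have := h m
  simpa [cf] using this

lemma cf_pd {N : ℕ} (k : ℕ) (F : MvPolynomial (Fin N) ℤ) (b : Fin N → ℕ) :
    cf (pd k F) b = ∑ i, cf F (Function.update b i (b i + k)) := by
  rw [cf, pd, MvPolynomial.coeff_sum]
  refine Finset.sum_congr rfl fun i _ => ?_
  rw [MvPolynomial.coeff_divMonomial, cf]
  congr 1
  ext j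
  by_cases h : j = i
  · subst h; simp [add_comm]
  · simp [h]

lemma cf_psum_mul {N : ℕ} (k : ℕ) (F : MvPolynomial (Fin N) ℤ) (b : Fin N → ℕ) :
    cf (MvPolynomial.psum (Fin N) ℤ k * F) b =
      ∑ i, if k ≤ b i then cf F (Function.update b i (b i - k)) else 0 := by
  rw [cf, MvPolynomial.psum, Finset.sum_mul, MvPolynomial.coeff_sum]
  refine Finset.sum_congr rfl fun i _ => ?_
  rw [MvPolynomial.X_pow_eq_monomial, MvPolynomial.coeff_monomial_mul', cf, one_mul]
  have h1 : (Finsupp.single i k ≤ Finsupp.equivFunOnFinite.symm b) ↔ k ≤ b i := by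
    simp
  simp only [h1]
  congr 2
  ext j
  by_cases h : j = i
  · subst h; simp
  · simp [h]

lemma Good.psum_mul {N d : ℕ} {F : MvPolynomial (Fin N) ℤ} (h : Good F d) (k : ℕ) :
    Good (MvPolynomial.psum (Fin N) ℤ k * F) (k + d) where
  alt w := by
    rw [map_mul, MvPolynomial.rename_psum, h.alt w, mul_smul_comm]
  hom := by
    rw [add_assoc]
    refine MvPolynomial.IsHomogeneous.mul ?_ h.hom
    refine MvPolynomial.IsHomogeneous.sum _ _ _ fun i _ => MvPolynomial.isHomogeneous_X_pow _ _

lemma heis {N d k l : ℕ} {F : MvPolynomial (Fin N) ℤ} (h : Good F d) (hk : k + d ≤ N)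
    (hl : l + d ≤ N) :
    pd k (MvPolynomial.psum (Fin N) ℤ l * F) =
      MvPolynomial.psum (Fin N) ℤ l * pd k F + (if k = l then (k : ℤ) else 0) • F := by
  apply cf_ext
  intro b
  have hsm : cf (MvPolynomial.psum (Fin N) ℤ l * pd k F + (if k = l then (k : ℤ) else 0) • F) b
      = cf (MvPolynomial.psum (Fin N) ℤ l * pd k F) b + (if k = l then (k : ℤ) else 0) * cf F b := by
    unfold cf
    rw [MvPolynomial.coeff_add, MvPolynomial.coeff_smul, smul_eq_mul]
  rw [hsm, cf_pd, cf_psum_mul]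
  simp only [cf_psum_mul, cf_pd]
  rw [← sub_eq_iff_eq_add']
  have e1 : (∑ j, if l ≤ b j then ∑ i, cf F (Function.update (Function.update b j (b j - l)) i
      ((Function.update b j (b j - l)) i + k)) else 0) =
      ∑ i, ∑ j, if l ≤ b j then cf F (Function.update (Function.update b j (b j - l)) i
      ((Function.update b j (b j - l)) i + k)) else 0 := by
    rw [Finset.sum_comm]
    refine Finset.sum_congr rfl fun j _ => ?_
    split_ifs
    · rfl
    · simp
  rw [e1, ← Finset.sum_sub_distrib]
  have e2 : ∀ i : Fin N, ((∑ j, if l ≤ Function.update b i (b i + k) j then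
        cf F (Function.update (Function.update b i (b i + k)) j (Function.update b i (b i + k) j - l)) else 0) -
      ∑ j, if l ≤ b j then cf F (Function.update (Function.update b j (b j - l)) i
      ((Function.update b j (b j - l)) i + k)) else 0) =
      if (b i < l ∧ l ≤ b i + k) then cf F (Function.update b i (b i + k - l)) else 0 := by
    intro i
    rw [← Finset.sum_sub_distrib, Finset.sum_eq_single i]
    · simp only [Function.update_self, Function.update_idem]
      by_cases h1 : l ≤ b i
      · have h2 : l ≤ b i + k := by omega
        have h3 : b i - l + k = b i + k - l := by omega
        have h4 : ¬ (b i < l) := by omega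
        simp [h1, h2, h3, h4]
      · have h4 : b i < l := by omega
        simp [h4, h1]
    · intro j _ hj
      rw [Function.update_of_ne hj, Function.update_of_ne (Ne.symm hj),
        Function.update_comm hj, sub_self]
    · simp
  rw [Finset.sum_congr rfl fun i _ => e2 i]
  by_cases hkl : k = l
  · subst hkl
    simp only [if_true]
    have e3 : ∀ i, (if (b i < k ∧ k ≤ b i + k) then cf F (Function.update b i (b i + k - k)) else 0) =
        (if b i < k then 1 else 0) * cf F b := by
      intro i
      simp
    rw [Finset.sum_congr rfl fun i _ => e3 i, ← Finset.sum_mul]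
    by_cases hz : cf F b = 0
    · simp [hz]
    have hi := h.inj hz
    have hd := h.deg hz
    congr 1
    rw [Finset.sum_boole]
    have : (Finset.univ.filter (fun i => b i < k)).card = (Finset.range k).card := by
      refine Finset.card_bij (fun i _ => b i) (by simp) (fun i _ j _ hij => hi hij) ?_
      intro v hv
      simp only [Finset.mem_range] at hv
      obtain ⟨i, hi⟩ := inj_small b hi hd v (by omega)
      exact ⟨i, by simp [hi, hv], hi⟩
    rw [this]; simp
  · simp only [hkl, if_false, zero_mul]
    by_cases hb : Function.Injective b
    · refine Finset.sum_eq_zero fun i _ => ?_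
      split_ifs with hc
      · by_contra hz
        have hi := h.inj hz
        have hd := h.deg hz
        obtain ⟨j, hj⟩ := inj_small _ hi hd (b i) (by omega)
        by_cases hji : j = i
        · subst hji
          rw [Function.update_self] at hj
          omega
        · rw [Function.update_of_ne hji] at hj
          exact hji (hb hj)
      · rfl
    · convert h.cancel hb (fun v => v < l ∧ l ≤ v + k) (fun v => v + k - l)

lemma pd_zero {N k : ℕ} {F : MvPolynomial (Fin N) ℤ} (h : Good F 0) (hk : 0 < k) : pd k F = 0 := by
  apply cf_ext
  intro b
  rw [cf_pd]
  have : cf (0 : MvPolynomial (Fin N) ℤ) b = 0 := by simp [cf]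
  rw [this]
  by_cases hb : Function.Injective b
  · refine Finset.sum_eq_zero fun i _ => ?_
    by_contra hz
    have hd := h.deg hz
    have h1 := inj_sum_ge b hb
    have h2 : ∑ j, Function.update b i (b i + k) j = ∑ j, b j + k := by
      rw [Finset.sum_update_of_mem (Finset.mem_univ i), ← Finset.add_sum_erase _ _ (Finset.mem_univ i)]
      rw [Finset.sdiff_singleton_eq_erase]
      omega
    omega
  · have := h.cancel hb (fun v => True) (fun v => v + k)
    simpa using this

/-- The Vandermonde alternant. -/
def vand (N : ℕ) : MvPolynomial (Fin N) ℤ :=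
  ∑ σ : Equiv.Perm (Fin N), MvPolynomial.monomial
    (Finsupp.equivFunOnFinite.symm (fun i => (σ i : ℕ))) (Equiv.Perm.sign σ : ℤ)

lemma vand_good (N : ℕ) : Good (vand N) 0 where
  alt w := by
    rw [vand, map_sum, Finset.smul_sum]
    rw [← Equiv.sum_comp (Equiv.mulRight w)]
    refine Finset.sum_congr rfl fun σ _ => ?_
    rw [MvPolynomial.rename_monomial, MvPolynomial.smul_monomial]
    have e1 : Finsupp.mapDomain w (Finsupp.equivFunOnFinite.symm
        (fun i => ((Equiv.mulRight w σ) i : ℕ))) = Finsupp.equivFunOnFinite.symm (fun i => (σ i : ℕ)) := by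
      rw [← Finsupp.equivMapDomain_eq_mapDomain]
      ext i; simp
    rw [e1]
    congr 1
    simp [mul_comm]
  hom := by
    refine MvPolynomial.IsHomogeneous.sum _ _ _ fun σ _ => MvPolynomial.isHomogeneous_monomial _ ?_
    rw [Finsupp.degree_eq_sum]
    simp only [Finsupp.equivFunOnFinite_symm_apply_apply, zero_add, triN]
    exact Equiv.sum_comp σ (fun i => (i : ℕ))

lemma cf_vand (N : ℕ) (σ : Equiv.Perm (Fin N)) : cf (vand N) (fun i => (σ i : ℕ)) = Equiv.Perm.sign σ := by
  rw [cf, vand, MvPolynomial.coeff_sum, Finset.sum_eq_single σ]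
  · simp
  · intro τ _ hτ
    rw [MvPolynomial.coeff_monomial, if_neg]
    intro h
    apply hτ
    ext i
    exact DFunLike.congr_fun h i
  · simp

/-- Product of power sums times Vandermonde. -/
def Pm (N : ℕ) (μ : Multiset ℕ) : MvPolynomial (Fin N) ℤ :=
  (μ.map (fun k => MvPolynomial.psum (Fin N) ℤ k)).prod * vand N

lemma Pm_cons (N k : ℕ) (μ : Multiset ℕ) :
    Pm N (k ::ₘ μ) = MvPolynomial.psum (Fin N) ℤ k * Pm N μ := by
  simp [Pm, mul_assoc]

lemma Pm_good (N : ℕ) (μ : Multiset ℕ) : Good (Pm N μ) μ.sum := by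
  induction μ using Multiset.induction_on with
  | empty => simpa [Pm] using vand_good N
  | cons k μ ih => rw [Pm_cons, Multiset.sum_cons]; exact ih.psum_mul k

lemma pd_Pm {N k : ℕ} (hk : 0 < k) (μ : Multiset ℕ) (h : k + μ.sum ≤ N) :
    pd k (Pm N μ) = ((k * μ.count k : ℕ) : ℤ) • Pm N (μ.erase k) := by
  induction μ using Multiset.induction_on with
  | empty => simpa [Pm] using pd_zero (vand_good N) hk
  | cons l μ ih =>
    rw [Multiset.sum_cons] at h
    rw [Pm_cons, heis (Pm_good N μ) (by omega) (by omega), ih (by omega)]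
    by_cases hkl : k = l
    · subst hkl
      rw [Multiset.erase_cons_head, Multiset.count_cons_self, if_pos rfl, mul_smul_comm, ← Pm_cons]
      by_cases hm : k ∈ μ
      · rw [Multiset.cons_erase hm, ← add_smul]
        congr 1
      · rw [Multiset.count_eq_zero_of_notMem hm]
        simp
    · rw [Multiset.erase_cons_tail _ (Ne.symm hkl), if_neg hkl, Multiset.count_cons_of_ne hkl, Pm_cons,
        mul_smul_comm, zero_smul, add_zero]

/-- The monomial inner product. -/
def ip {N : ℕ} (G : MvPolynomial (Fin N) ℤ) : MvPolynomial (Fin N) ℤ →ₗ[ℤ] ℤ :=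
  (MvPolynomial.basisMonomials (Fin N) ℤ).constr ℤ (fun m => MvPolynomial.coeff m G)

lemma ip_monomial {N : ℕ} (G : MvPolynomial (Fin N) ℤ) (m : Fin N →₀ ℕ) :
    ip G (MvPolynomial.monomial m 1) = MvPolynomial.coeff m G := by
  have := (MvPolynomial.basisMonomials (Fin N) ℤ).constr_basis ℤ (fun m => MvPolynomial.coeff m G) m
  rwa [MvPolynomial.coe_basisMonomials] at this

lemma ip_eq_sum {N : ℕ} (G F : MvPolynomial (Fin N) ℤ) :
    ip G F = ∑ m ∈ F.support, MvPolynomial.coeff m F * MvPolynomial.coeff m G := by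
  conv_lhs => rw [← MvPolynomial.support_sum_monomial_coeff F]
  rw [map_sum]
  refine Finset.sum_congr rfl fun m _ => ?_
  have : MvPolynomial.monomial m (MvPolynomial.coeff m F) =
      (MvPolynomial.coeff m F) • MvPolynomial.monomial m (1 : ℤ) := by
    rw [MvPolynomial.smul_monomial, smul_eq_mul, mul_one]
  rw [this, map_smul, ip_monomial, smul_eq_mul]

lemma ip_adj {N : ℕ} (k : ℕ) (G F : MvPolynomial (Fin N) ℤ) :
    ip G (MvPolynomial.psum (Fin N) ℤ k * F) = ip (pd k G) F := by
  have : (ip G) ∘ₗ (LinearMap.mulLeft ℤ (MvPolynomial.psum (Fin N) ℤ k)) = ip (pd k G) := by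
    refine (MvPolynomial.basisMonomials (Fin N) ℤ).ext fun m => ?_
    rw [MvPolynomial.coe_basisMonomials, ip_monomial, LinearMap.comp_apply, LinearMap.mulLeft_apply,
      MvPolynomial.psum, Finset.sum_mul, map_sum, pd, MvPolynomial.coeff_sum]
    refine Finset.sum_congr rfl fun i _ => ?_
    rw [MvPolynomial.X_pow_eq_monomial, MvPolynomial.monomial_mul, one_mul, ip_monomial,
      MvPolynomial.coeff_divMonomial]
  exact LinearMap.congr_fun this F

/-- The order of the centralizer of an element of cycle type `μ`. -/
def zf (μ : Multiset ℕ) : ℕ := μ.prod * ∏ k ∈ μ.toFinset, (μ.count k).factorial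

lemma zf_prod_superset (μ : Multiset ℕ) (S : Finset ℕ) (h : μ.toFinset ⊆ S) :
    ∏ k ∈ μ.toFinset, (μ.count k).factorial = ∏ k ∈ S, (μ.count k).factorial := by
  refine Finset.prod_subset h fun x _ hx => ?_
  rw [Multiset.mem_toFinset] at hx
  rw [Multiset.count_eq_zero_of_notMem hx]; rfl

lemma zf_cons (k : ℕ) (μ : Multiset ℕ) : zf (k ::ₘ μ) = k * (μ.count k + 1) * zf μ := by
  have hk : k ∈ (k ::ₘ μ).toFinset := by simp
  rw [zf, zf, zf_prod_superset μ (k ::ₘ μ).toFinset (by intro x; simp; tauto),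
    ← Finset.mul_prod_erase _ _ hk, ← Finset.mul_prod_erase _ (fun j => (μ.count j).factorial) hk,
    Multiset.prod_cons, Multiset.count_cons_self, Nat.factorial_succ]
  have : ∏ j ∈ (k ::ₘ μ).toFinset.erase k, ((k ::ₘ μ).count j).factorial =
      ∏ j ∈ (k ::ₘ μ).toFinset.erase k, (μ.count j).factorial := by
    refine Finset.prod_congr rfl fun j hj => ?_
    rw [Multiset.count_cons_of_ne (Finset.ne_of_mem_erase hj)]
  rw [this]; ring

lemma ip_vand (N : ℕ) : ip (vand N) (vand N) = (N.factorial : ℤ) := by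
  conv_lhs => arg 2; rw [vand]
  rw [map_sum]
  have : ∀ σ : Equiv.Perm (Fin N), ip (vand N) (MvPolynomial.monomial
    (Finsupp.equivFunOnFinite.symm (fun i => (σ i : ℕ))) (Equiv.Perm.sign σ : ℤ)) = 1 := by
    intro σ
    have h1 : MvPolynomial.monomial (Finsupp.equivFunOnFinite.symm (fun i => (σ i : ℕ))) (Equiv.Perm.sign σ : ℤ) =
      (Equiv.Perm.sign σ : ℤ) • MvPolynomial.monomial (Finsupp.equivFunOnFinite.symm (fun i => (σ i : ℕ))) (1 : ℤ) := by
      rw [MvPolynomial.smul_monomial, smul_eq_mul, mul_one]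
    have h2 := cf_vand N σ
    rw [cf] at h2
    rw [h1, map_smul, ip_monomial, h2, smul_eq_mul]
    rcases Int.units_eq_one_or (Equiv.Perm.sign σ) with h | h <;> rw [h] <;> simp
  rw [Finset.sum_congr rfl fun σ _ => this σ]
  simp [Fintype.card_perm]

lemma ip_Pm {N : ℕ} (μ : Multiset ℕ) : ∀ (ν : Multiset ℕ), (∀ k ∈ μ, 0 < k) → (∀ k ∈ ν, 0 < k) →
    μ.sum = ν.sum → 2 * μ.sum ≤ N →
    ip (Pm N ν) (Pm N μ) = if μ = ν then ((zf μ * N.factorial : ℕ) : ℤ) else 0 := by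
  induction μ using Multiset.induction_on with
  | empty =>
    intro ν _ hν hs _
    have : ν = 0 := by
      rw [Multiset.eq_zero_iff_forall_notMem]
      intro k hk
      have h1 := hν k hk
      have h2 := Multiset.le_sum_of_mem hk
      simp at hs
      omega
    subst this
    simp [Pm, zf, ip_vand]
  | cons k μ ih =>
    intro ν hμ hν hs hN
    rw [Multiset.sum_cons] at hs hN
    have hk : 0 < k := hμ k (by simp)
    rw [Pm_cons, ip_adj, pd_Pm hk ν (by omega)]
    have hsm : ∀ (c : ℤ) (G F : MvPolynomial (Fin N) ℤ), ip (c • G) F = c * ip G F := by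
      intro c G F
      rw [ip_eq_sum, ip_eq_sum, Finset.mul_sum]
      refine Finset.sum_congr rfl fun m _ => ?_
      rw [MvPolynomial.coeff_smul, smul_eq_mul]; ring
    rw [hsm]
    by_cases hm : k ∈ ν
    · obtain ⟨ν', rfl⟩ := Multiset.exists_cons_of_mem hm
      rw [Multiset.sum_cons] at hs
      rw [Multiset.erase_cons_head, Multiset.count_cons_self,
        ih ν' (fun j hj => hμ j (by simp [hj])) (fun j hj => hν j (by simp [hj])) (by omega) (by omega)]
      simp only [Multiset.cons_inj_right]
      split_ifs with he
      · subst he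
        rw [zf_cons]; push_cast; ring
      · simp
    · rw [Multiset.count_eq_zero_of_notMem hm, if_neg]
      · simp
      · rintro rfl; simp at hm

/-- The multiset of cycle lengths, fixed points included. -/
def cyc {n : ℕ} (g : Equiv.Perm (Fin n)) : Multiset ℕ := g.partition.parts

lemma prod_orbits {n : ℕ} (g : Equiv.Perm (Fin n)) {R : Type} [CommMonoid R] (p : ℕ → R) :
    ∏ c : Quotient (Equiv.Perm.SameCycle.setoid g),
      p (Finset.univ.filter (fun x => (Quotient.mk (Equiv.Perm.SameCycle.setoid g) x) = c)).card =
      ((cyc g).map p).prod := by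
  let Q := Quotient (Equiv.Perm.SameCycle.setoid g)
  let q : Fin n → Q := Quotient.mk (Equiv.Perm.SameCycle.setoid g)
  have hq : ∀ x y, q x = q y ↔ g.SameCycle x y := fun x y => Quotient.eq
  have hqs : Function.Surjective q := Quotient.mk_surjective
  let nt : Q → Prop := fun c => ∃ x, q x = c ∧ g x ≠ x
  rw [← Finset.prod_filter_mul_prod_filter_not Finset.univ nt]
  rw [cyc, Equiv.Perm.parts_partition, Multiset.map_add, Multiset.prod_add, Multiset.map_replicate,
    Multiset.prod_replicate]
  congr 1
  · rw [Equiv.Perm.cycleType_def, Multiset.map_map]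
    change _ = ∏ σ ∈ g.cycleFactorsFinset, p (σ.support.card)
    have hlift : ∀ x y, g.SameCycle x y → g.cycleOf x = g.cycleOf y := fun x y h => h.cycleOf_eq
    let φ : Q → Equiv.Perm (Fin n) := Quotient.lift (fun x => g.cycleOf x) hlift
    have hφ : ∀ x, φ (q x) = g.cycleOf x := fun x => rfl
    refine Finset.prod_bij (fun c _ => φ c) ?_ ?_ ?_ ?_
    · intro c hc
      obtain ⟨x, rfl, hx⟩ := (Finset.mem_filter.mp hc).2
      rw [hφ, Equiv.Perm.cycleOf_mem_cycleFactorsFinset_iff, Equiv.Perm.mem_support]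
      exact hx
    · intro c hc c' hc' h
      obtain ⟨x, rfl, hx⟩ := (Finset.mem_filter.mp hc).2
      obtain ⟨y, rfl, hy⟩ := (Finset.mem_filter.mp hc').2
      simp only [hφ] at h
      rw [hq]
      have : x ∈ (g.cycleOf x).support := by
        rw [Equiv.Perm.mem_support_cycleOf_iff]
        exact ⟨Equiv.Perm.SameCycle.refl _ _, Equiv.Perm.mem_support.mpr hx⟩
      rw [h, Equiv.Perm.mem_support_cycleOf_iff] at this
      exact this.1.symm
    · intro σ hσ
      have hσ' := Equiv.Perm.mem_cycleFactorsFinset_iff.mp hσ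
      obtain ⟨x, hx⟩ := hσ'.1.nonempty_support
      have hc := Equiv.Perm.cycle_is_cycleOf hx hσ
      refine ⟨q x, ?_, ?_⟩
      · rw [Finset.mem_filter]
        refine ⟨Finset.mem_univ _, x, rfl, ?_⟩
        rw [← hσ'.2 x hx]
        exact Equiv.Perm.mem_support.mp hx
      · rw [hφ]; exact hc.symm
    · intro c hc
      obtain ⟨x, rfl, hx⟩ := (Finset.mem_filter.mp hc).2
      rw [hφ]
      congr 2
      ext y
      rw [Equiv.Perm.mem_support_cycleOf_iff, Finset.mem_filter]
      constructor
      · rintro ⟨_, h⟩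
        exact ⟨((hq y x).mp h).symm, Equiv.Perm.mem_support.mpr hx⟩
      · rintro ⟨h, _⟩
        exact ⟨Finset.mem_univ _, (hq y x).mpr h.symm⟩
  · have h1 : ∀ c ∈ Finset.univ.filter (fun c => ¬ nt c),
        p (Finset.univ.filter (fun x => (Quotient.mk (Equiv.Perm.SameCycle.setoid g) x) = c)).card = p 1 := by
      intro c hc
      have hc := (Finset.mem_filter.mp hc).2
      obtain ⟨x, rfl⟩ := hqs c
      congr 1
      rw [Finset.card_eq_one]
      refine ⟨x, ?_⟩
      ext y
      simp only [Finset.mem_filter, Finset.mem_univ, true_and, Finset.mem_singleton]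
      constructor
      · intro h
        have h2 : g.SameCycle y x := (hq y x).mp h
        have h3 : g x = x := by
          by_contra h3; exact hc ⟨x, rfl, h3⟩
        obtain ⟨i, hi⟩ := h2.symm
        rw [Equiv.Perm.zpow_apply_eq_self_of_apply_eq_self h3] at hi
        exact hi.symm
      · rintro rfl; rfl
    rw [Finset.prod_congr rfl h1, Finset.prod_const]
    congr 1
    have h2 : Fintype.card (Fin n) - g.support.card = (Finset.univ.filter (fun x => g x = x)).card := by
      have := Finset.card_compl g.support
      rw [← this]
      congr 1
      ext x; simp
    rw [h2]
    symm
    refine Finset.card_bij (fun x _ => q x) ?_ ?_ ?_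
    · intro x hx
      have hx := (Finset.mem_filter.mp hx).2
      rw [Finset.mem_filter]
      refine ⟨Finset.mem_univ _, ?_⟩
      rintro ⟨y, hy, hy2⟩
      have h2 : g.SameCycle x y := ((hq y x).mp hy).symm
      obtain ⟨i, hi⟩ := h2
      rw [Equiv.Perm.zpow_apply_eq_self_of_apply_eq_self hx] at hi
      exact hy2 (hi ▸ hx)
    · intro x hx y hy h
      have hx := (Finset.mem_filter.mp hx).2
      obtain ⟨i, hi⟩ := (hq x y).mp h
      rwa [Equiv.Perm.zpow_apply_eq_self_of_apply_eq_self hx] at hi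
    · intro c hc
      have hc := (Finset.mem_filter.mp hc).2
      obtain ⟨x, rfl⟩ := hqs c
      refine ⟨x, ?_, rfl⟩
      rw [Finset.mem_filter]
      refine ⟨Finset.mem_univ _, ?_⟩
      by_contra h3; exact hc ⟨x, rfl, h3⟩

lemma sum_fixed {n N : ℕ} (g : Equiv.Perm (Fin n)) :
    ((cyc g).map (fun k => MvPolynomial.psum (Fin N) ℤ k)).prod =
      ∑ f ∈ Finset.univ.filter (fun f : Fin n → Fin N => f ∘ g = f),
        MvPolynomial.monomial (∑ x, Finsupp.single (f x) 1) (1 : ℤ) := by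
  rw [← prod_orbits g (fun k => MvPolynomial.psum (Fin N) ℤ k)]
  let Q := Quotient (Equiv.Perm.SameCycle.setoid g)
  let q : Fin n → Q := Quotient.mk (Equiv.Perm.SameCycle.setoid g)
  have hq : ∀ x y, q x = q y ↔ g.SameCycle x y := fun x y => Quotient.eq
  have hqs : Function.Surjective q := Quotient.mk_surjective
  simp only [MvPolynomial.psum]
  rw [Finset.prod_univ_sum, Fintype.piFinset_univ]
  refine Finset.sum_bij (fun h _ => h ∘ q) ?_ ?_ ?_ ?_
  · intro h _
    rw [Finset.mem_filter]
    refine ⟨Finset.mem_univ _, ?_⟩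
    funext x
    simp only [Function.comp]
    congr 1
    rw [hq]
    exact Equiv.Perm.sameCycle_apply_left.mpr (Equiv.Perm.SameCycle.refl _ _)
  · intro h _ h' _ he
    exact hqs.injective_comp_right he
  · intro f hf
    have hf := (Finset.mem_filter.mp hf).2
    have hf' : ∀ x, f (g x) = f x := fun x => congrFun hf x
    have hz : ∀ (x y), g.SameCycle x y → f x = f y := by
      rintro x y ⟨i, rfl⟩
      induction i using Int.induction_on with
      | zero => simp
      | succ i ih => rw [add_comm, zpow_add, zpow_one, Equiv.Perm.mul_apply, hf', ← ih]
      | pred i ih =>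
        rw [ih, ← hf' ((g ^ (-(i : ℤ) - 1)) x), ← Equiv.Perm.mul_apply, ← zpow_one_add]
        congr 3
        ring
    exact ⟨Quotient.lift f hz, Finset.mem_univ _, rfl⟩
  · intro h _
    have h1 : MvPolynomial.monomial (∑ x, Finsupp.single ((h ∘ q) x) 1) (1 : ℤ) =
        ∏ x, MvPolynomial.X (h (q x)) := by
      rw [MvPolynomial.monomial_sum_one]
      rfl
    rw [h1, ← Finset.prod_fiberwise_of_maps_to (g := q) (t := Finset.univ) (fun _ _ => Finset.mem_univ _)]
    refine Finset.prod_congr rfl fun c _ => ?_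
    rw [← Finset.prod_const]
    refine Finset.prod_congr rfl fun x hx => ?_
    rw [(Finset.mem_filter.mp hx).2]

/-- The virtual characters. -/
def chi (N : ℕ) {n : ℕ} (b : Fin N → ℕ) (g : Equiv.Perm (Fin n)) : ℤ := cf (Pm N (cyc g)) b

lemma chi_eq {n N : ℕ} (b : Fin N → ℕ) (g : Equiv.Perm (Fin n)) :
    chi N b g = ∑ σ : Equiv.Perm (Fin N), (Equiv.Perm.sign σ : ℤ) *
      ((Finset.univ.filter (fun f : Fin n → Fin N => f ∘ g = f ∧
        (∑ x, Finsupp.single (f x) 1) + Finsupp.equivFunOnFinite.symm (fun i => (σ i : ℕ)) =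
          Finsupp.equivFunOnFinite.symm b)).card : ℤ) := by
  rw [chi, cf, Pm, sum_fixed, vand, Finset.mul_sum, MvPolynomial.coeff_sum]
  refine Finset.sum_congr rfl fun σ _ => ?_
  rw [Finset.sum_mul, MvPolynomial.coeff_sum]
  simp only [MvPolynomial.monomial_mul, one_mul, MvPolynomial.coeff_monomial]
  rw [Finset.sum_ite, Finset.sum_const_zero, add_zero, Finset.sum_const, Finset.filter_filter,
    nsmul_eq_mul, mul_comm]

lemma perm_integral_sub (G X : Type) [Group G] [Fintype G] [MulAction G X] [Fintype X] (P : X → Prop)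
    (hP : ∀ (g : G) x, P x → P (g • x)) (V : FDRep ℂ G) :
    ∃ m : ℕ, (Nat.card G : ℂ)⁻¹ * ∑ g : G,
      ((Finset.univ.filter (fun x : X => g • x = x ∧ P x)).card : ℂ) * V.character g⁻¹ = m := by
  let S : SubMulAction G X := ⟨{x | P x}, fun g x hx => hP g x hx⟩
  obtain ⟨m, hm⟩ := perm_integral G S V
  refine ⟨m, ?_⟩
  rw [← hm]
  congr 1
  refine Finset.sum_congr rfl fun g _ => ?_
  congr 2
  symm
  refine Finset.card_bij (fun x _ => x.1) ?_ ?_ ?_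
  · intro x hx
    have hx := ((@Finset.mem_filter _ _ (_) _ _).mp hx).2
    rw [Finset.mem_filter]
    exact ⟨Finset.mem_univ _, congrArg Subtype.val hx, x.2⟩
  · intro x _ y _ h
    exact Subtype.ext h
  · intro x hx
    have hx := (Finset.mem_filter.mp hx).2
    refine ⟨⟨x, hx.2⟩, ?_, rfl⟩
    refine (@Finset.mem_filter _ _ (_) _ _).mpr ?_
    exact ⟨Finset.mem_univ _, Subtype.ext hx.1⟩

lemma chi_integral {n N : ℕ} (b : Fin N → ℕ) (V : FDRep ℂ (Equiv.Perm (Fin n))) :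
    ∃ m : ℤ, (Nat.card (Equiv.Perm (Fin n)) : ℂ)⁻¹ * ∑ g : Equiv.Perm (Fin n),
      (chi N b g : ℂ) * V.character g⁻¹ = m := by
  let : MulAction (Equiv.Perm (Fin n)) (Fin n → Fin N) := arrowAction
  have hact : ∀ (g : Equiv.Perm (Fin n)) (f : Fin n → Fin N), g • f = f ∘ (g⁻¹ : Equiv.Perm (Fin n)) := fun g f => rfl
  have key := fun σ : Equiv.Perm (Fin N) => perm_integral_sub (Equiv.Perm (Fin n)) (Fin n → Fin N)
    (fun f => (∑ x, Finsupp.single (f x) 1) + Finsupp.equivFunOnFinite.symm (fun i => (σ i : ℕ)) =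
          Finsupp.equivFunOnFinite.symm b) (by
      intro g f hf
      rw [← hf, hact]
      congr 1
      exact Equiv.sum_comp (g⁻¹ : Equiv.Perm (Fin n)) (fun x => Finsupp.single (f x) 1)) V
  choose m hm using key
  refine ⟨∑ σ : Equiv.Perm (Fin N), (Equiv.Perm.sign σ : ℤ) * m σ, ?_⟩
  push_cast
  simp only [← hm]
  simp only [chi_eq]
  push_cast
  simp only [Finset.mul_sum, Finset.sum_mul]
  rw [Finset.sum_comm]
  refine Finset.sum_congr rfl fun σ _ => Finset.sum_congr rfl fun g _ => ?_
  have : ∀ f : Fin n → Fin N, g • f = f ↔ f ∘ g = f := by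
    intro f
    rw [hact]
    constructor
    · intro h
      conv_lhs => rw [← h]
      funext x; simp
    · intro h
      conv_lhs => rw [← h]
      funext x; simp
  simp only [this]
  ring

/-- A finite box containing the supports of all polynomials of interest. -/
def Bx (N n : ℕ) : Finset (Fin N → ℕ) := Fintype.piFinset (fun _ => Finset.range (n + triN N + 1))

lemma mem_Bx_of_sum {N n : ℕ} {b : Fin N → ℕ} (hb : ∑ i, b i = n + triN N) : b ∈ Bx N n := by
  rw [Bx, Fintype.mem_piFinset]
  intro i
  rw [Finset.mem_range, ← hb]
  exact Nat.lt_succ_of_le (Finset.single_le_sum (f := b) (fun _ _ => Nat.zero_le _) (Finset.mem_univ i))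

lemma Bx_comp {N n : ℕ} {b : Fin N → ℕ} (hb : b ∈ Bx N n) (w : Equiv.Perm (Fin N)) :
    b ∘ w ∈ Bx N n := by
  rw [Bx, Fintype.mem_piFinset] at *
  exact fun i => hb (w i)

lemma Good.mem_Bx {N n : ℕ} {F : MvPolynomial (Fin N) ℤ} (h : Good F n) {b : Fin N → ℕ}
    (hb : cf F b ≠ 0) : b ∈ Bx N n := mem_Bx_of_sum (h.deg hb)

lemma ip_Bx {N n : ℕ} {F G : MvPolynomial (Fin N) ℤ} (hF : Good F n) :
    ip G F = ∑ b ∈ Bx N n, cf F b * cf G b := by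
  rw [ip_eq_sum]
  symm
  refine Finset.sum_bij_ne_zero (fun b _ _ => Finsupp.equivFunOnFinite.symm b) ?_ ?_ ?_ ?_
  · intro b hb h
    rw [MvPolynomial.mem_support_iff]
    exact fun h0 => h (by rw [cf, h0, zero_mul])
  · intro b _ _ c _ _ h
    exact Finsupp.equivFunOnFinite.symm.injective h
  · intro m hm h
    have h1 : cf F (Finsupp.equivFunOnFinite m) = MvPolynomial.coeff m F := by simp [cf]
    have h2 : cf G (Finsupp.equivFunOnFinite m) = MvPolynomial.coeff m G := by simp [cf]
    refine ⟨Finsupp.equivFunOnFinite m, hF.mem_Bx ?_, ?_, by simp⟩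
    · rw [h1]; exact MvPolynomial.mem_support_iff.mp hm
    · rw [h1, h2]; exact h
  · intro b _ _; rfl

lemma cyc_pos {n : ℕ} (g : Equiv.Perm (Fin n)) : ∀ k ∈ cyc g, 0 < k := fun _ hk => g.partition.parts_pos hk

lemma cyc_sum {n : ℕ} (g : Equiv.Perm (Fin n)) : (cyc g).sum = n := by
  rw [cyc, g.partition.parts_sum, Fintype.card_fin]

lemma cyc_eq_iff {n : ℕ} (g h : Equiv.Perm (Fin n)) : cyc g = cyc h ↔ IsConj g h := by
  rw [Equiv.Perm.partition_eq_of_isConj]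
  exact ⟨fun h => Nat.Partition.ext h, fun h => by rw [cyc, cyc, h]⟩

lemma Pm_cyc_good {n : ℕ} (N : ℕ) (g : Equiv.Perm (Fin n)) : Good (Pm N (cyc g)) n := by
  have := Pm_good N (cyc g)
  rwa [cyc_sum] at this

lemma chi_orth {N n : ℕ} (hN : 2 * n ≤ N) (g h : Equiv.Perm (Fin n)) :
    ∑ b ∈ Bx N n, chi N b g * chi N b h =
      if IsConj g h then ((zf (cyc g) * N.factorial : ℕ) : ℤ) else 0 := by
  have h1 := ip_Bx (G := Pm N (cyc h)) (Pm_cyc_good N g)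
  rw [ip_Pm _ _ (cyc_pos g) (cyc_pos h) (by rw [cyc_sum, cyc_sum]) (by rwa [cyc_sum])] at h1
  simp only [chi]
  rw [← h1]
  simp only [cyc_eq_iff]

lemma zf_class {n : ℕ} (g : Equiv.Perm (Fin n)) :
    (Finset.univ.filter (fun h => IsConj g h)).card * zf (cyc g) = n.factorial := by
  have h := Equiv.Perm.card_isConj_mul_eq g
  rw [Fintype.card_fin] at h
  rw [← h]
  congr 1
  · rw [Nat.card_eq_fintype_card, Fintype.card_subtype]
    congr 1
  · have h1 : (1 : ℕ) ∉ g.cycleType := fun h => by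
      have := Equiv.Perm.two_le_of_mem_cycleType h
      omega
    rw [zf, cyc, Equiv.Perm.parts_partition, Fintype.card_fin, Equiv.Perm.sum_cycleType]
    rw [Multiset.prod_add, Multiset.prod_replicate, one_pow, mul_one,
      mul_comm _ g.cycleType.prod, mul_assoc]
    congr 1
    rw [zf_prod_superset _ (insert 1 g.cycleType.toFinset)]
    · rw [Finset.prod_insert (by simpa using h1), Multiset.count_add, Multiset.count_eq_zero_of_notMem h1, Multiset.count_replicate_self, zero_add]
      congr 1
      refine Finset.prod_congr rfl fun k hk => ?_
      have : k ≠ 1 := fun h => h1 (by rw [← h]; simpa using hk)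
      rw [Multiset.count_add, Multiset.count_replicate, if_neg (Ne.symm this), add_zero]
    · intro k hk
      simp only [Multiset.mem_toFinset, Multiset.mem_add, Finset.mem_insert] at hk ⊢
      rcases hk with hk | hk
      · exact Or.inr hk
      · exact Or.inl (Multiset.eq_of_mem_replicate hk)

lemma chi_conj {N n : ℕ} (b : Fin N → ℕ) {g h : Equiv.Perm (Fin n)} (hc : IsConj g h) :
    chi N b g = chi N b h := by
  rw [chi, chi, (cyc_eq_iff g h).mpr hc]

lemma chi_comp {N n : ℕ} (b : Fin N → ℕ) (g : Equiv.Perm (Fin n)) (w : Equiv.Perm (Fin N)) :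
    chi N (b ∘ w) g = (Equiv.Perm.sign w : ℤ) * chi N b g := (Pm_cyc_good N g).cf_comp b w

lemma isConj_inv {n : ℕ} (g : Equiv.Perm (Fin n)) : IsConj g g⁻¹ := by
  rw [Equiv.Perm.isConj_iff_cycleType_eq, Equiv.Perm.cycleType_inv]

lemma char_isConj {n : ℕ} (V : FDRep ℂ (Equiv.Perm (Fin n))) {g h : Equiv.Perm (Fin n)} (hc : IsConj g h) :
    V.character g = V.character h := by
  obtain ⟨c, hc⟩ := isConj_iff.mp hc
  rw [← hc, FDRep.char_conj]

lemma cyc_one (n : ℕ) : cyc (1 : Equiv.Perm (Fin n)) = Multiset.replicate n 1 := by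
  rw [cyc, Equiv.Perm.parts_partition]
  simp

lemma sq_eq_one_cases {x : ℤ} (h : x ^ 2 = 1) : x = 1 ∨ x = -1 := by simpa using h

/-- The multiplicity of `V` in the virtual character `chi N b`. -/
def MM (N : ℕ) {n : ℕ} (V : FDRep ℂ (Equiv.Perm (Fin n))) (b : Fin N → ℕ) : ℤ :=
  (chi_integral b V).choose

lemma MM_spec (N : ℕ) {n : ℕ} (V : FDRep ℂ (Equiv.Perm (Fin n))) (b : Fin N → ℕ) :
    (MM N V b : ℂ) = (Nat.card (Equiv.Perm (Fin n)) : ℂ)⁻¹ * ∑ g : Equiv.Perm (Fin n),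
      (chi N b g : ℂ) * V.character g⁻¹ := (chi_integral b V).choose_spec.symm

lemma MM_congr {N n : ℕ} {V W : FDRep ℂ (Equiv.Perm (Fin n))} (h : V.character = W.character)
    (b : Fin N → ℕ) : MM N V b = MM N W b := by
  have : (MM N V b : ℂ) = MM N W b := by rw [MM_spec, MM_spec, h]
  exact_mod_cast this

lemma MM_comp {N n : ℕ} (V : FDRep ℂ (Equiv.Perm (Fin n))) (b : Fin N → ℕ) (w : Equiv.Perm (Fin N)) :
    MM N V (b ∘ w) = (Equiv.Perm.sign w : ℤ) * MM N V b := by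
  have : (MM N V (b ∘ w) : ℂ) = ((Equiv.Perm.sign w : ℤ) : ℂ) * MM N V b := by
    rw [MM_spec, MM_spec]
    simp only [Finset.mul_sum]
    refine Finset.sum_congr rfl fun g _ => ?_
    rw [chi_comp]
    push_cast
    ring
  exact_mod_cast this

lemma card_perm_ne (n : ℕ) : (Nat.card (Equiv.Perm (Fin n)) : ℂ) ≠ 0 :=
  Nat.cast_ne_zero.mpr Nat.card_pos.ne'

lemma sum_chi_MM {N n : ℕ} (hN : 2 * n ≤ N) (V : FDRep ℂ (Equiv.Perm (Fin n))) (g : Equiv.Perm (Fin n)) :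
    ∑ b ∈ Bx N n, (chi N b g : ℂ) * MM N V b = (N.factorial : ℂ) * V.character g := by
  simp only [MM_spec]
  have h1 : ∀ b ∈ Bx N n, (chi N b g : ℂ) * ((Nat.card (Equiv.Perm (Fin n)) : ℂ)⁻¹ * ∑ h : Equiv.Perm (Fin n),
      (chi N b h : ℂ) * V.character h⁻¹) = ∑ h : Equiv.Perm (Fin n), (Nat.card (Equiv.Perm (Fin n)) : ℂ)⁻¹ *
        (((chi N b g * chi N b h : ℤ) : ℂ) * V.character h⁻¹) := by
    intro b _
    rw [Finset.mul_sum, Finset.mul_sum]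
    refine Finset.sum_congr rfl fun h _ => ?_
    rw [Int.cast_mul]
    ring
  rw [Finset.sum_congr rfl h1, Finset.sum_comm]
  have h2 : ∀ h ∈ (Finset.univ : Finset (Equiv.Perm (Fin n))), ∑ b ∈ Bx N n, (Nat.card (Equiv.Perm (Fin n)) : ℂ)⁻¹ *
        (((chi N b g * chi N b h : ℤ) : ℂ) * V.character h⁻¹) = if IsConj g h then
        (Nat.card (Equiv.Perm (Fin n)) : ℂ)⁻¹ * (((zf (cyc g) * N.factorial : ℕ) : ℂ) * V.character g) else 0 := by
    intro h _
    rw [← Finset.mul_sum, ← Finset.sum_mul, ← Int.cast_sum, chi_orth hN]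
    split_ifs with hc
    · rw [char_isConj V (hc.trans (isConj_inv h))]
      push_cast
      rfl
    · simp
  rw [Finset.sum_congr rfl h2, ← Finset.sum_filter, Finset.sum_const, nsmul_eq_mul]
  have h3 := zf_class g
  have h4 : (((Finset.univ.filter (fun h => IsConj g h)).card : ℂ) * zf (cyc g)) = Nat.card (Equiv.Perm (Fin n)) := by
    rw [← Nat.cast_mul, h3, Nat.card_perm, Nat.card_fin]
  have h5 := card_perm_ne n
  push_cast
  calc _ = (((Finset.univ.filter (fun h => IsConj g h)).card : ℂ) * zf (cyc g)) *
        (Nat.card (Equiv.Perm (Fin n)) : ℂ)⁻¹ * (N.factorial * V.character g) := by ring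
    _ = _ := by rw [h4, mul_inv_cancel₀ h5, one_mul]

lemma MM_orth {N n : ℕ} (hN : 2 * n ≤ N) (V : FDRep ℂ (Equiv.Perm (Fin n)))
    [CategoryTheory.Simple V] : ∑ b ∈ Bx N n, MM N V b ^ 2 = (N.factorial : ℤ) := by
  have : ((∑ b ∈ Bx N n, MM N V b ^ 2 : ℤ) : ℂ) = (N.factorial : ℂ) := by
    push_cast
    have h1 : ∀ b ∈ Bx N n, (MM N V b : ℂ) ^ 2 = ∑ g : Equiv.Perm (Fin n), (Nat.card (Equiv.Perm (Fin n)) : ℂ)⁻¹ *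
        (((chi N b g : ℂ) * MM N V b) * V.character g⁻¹) := by
      intro b _
      rw [sq]
      nth_rewrite 1 [MM_spec]
      rw [Finset.mul_sum, Finset.sum_mul]
      refine Finset.sum_congr rfl fun h _ => ?_
      ring
    rw [Finset.sum_congr rfl h1, Finset.sum_comm]
    simp only [← Finset.mul_sum, ← Finset.sum_mul, sum_chi_MM hN]
    have := FDRep.char_orthonormal V V
    rw [if_pos ⟨CategoryTheory.Iso.refl _⟩] at this
    simp only [mul_assoc]
    rw [← Finset.mul_sum, mul_left_comm, this]
    simp
  exact_mod_cast this

lemma exists_MM {N n : ℕ} (hN : 2 * n ≤ N) (V : FDRep ℂ (Equiv.Perm (Fin n)))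
    [CategoryTheory.Simple V] : ∃ b ∈ Bx N n, MM N V b ≠ 0 := by
  have h := MM_orth hN V
  by_contra! h0
  rw [Finset.sum_congr rfl (fun b hb => by rw [h0 b hb])] at h
  simp only [ne_eq, OfNat.ofNat_ne_zero, not_false_eq_true, zero_pow, Finset.sum_const_zero] at h
  have := N.factorial_pos
  omega

lemma comp_inj {N : ℕ} {b : Fin N → ℕ} (hb : Function.Injective b) :
    Function.Injective (fun w : Equiv.Perm (Fin N) => b ∘ w) := by
  intro w w' h
  ext i
  exact congrArg _ (hb (congrFun h i))

lemma MM_struct {N n : ℕ} (hN : 2 * n ≤ N) (V : FDRep ℂ (Equiv.Perm (Fin n)))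
    [CategoryTheory.Simple V] {b : Fin N → ℕ} (hb : MM N V b ≠ 0) :
    Function.Injective b ∧ b ∈ Bx N n ∧ MM N V b ^ 2 = 1 ∧
      (∀ b' ∈ Bx N n, MM N V b' ≠ 0 → ∃ w : Equiv.Perm (Fin N), b' = b ∘ w) ∧
      ∀ g, V.character g = MM N V b * chi N b g := by
  have h1 : ∃ g : Equiv.Perm (Fin n), chi N b g ≠ 0 := by
    by_contra! h
    apply hb
    have := MM_spec N V b
    simp only [h] at this
    simpa using this
  obtain ⟨g, hg⟩ := h1
  have hinj : Function.Injective b := (Pm_cyc_good N g).inj hg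
  have hbx : b ∈ Bx N n := (Pm_cyc_good N g).mem_Bx hg
  let O : Finset (Fin N → ℕ) := Finset.univ.image (fun w : Equiv.Perm (Fin N) => b ∘ w)
  have hO : O ⊆ Bx N n := by
    intro c hc
    obtain ⟨w, _, rfl⟩ := Finset.mem_image.mp hc
    exact Bx_comp hbx w
  have hs : ∀ w : Equiv.Perm (Fin N), (Equiv.Perm.sign w : ℤ) ^ 2 = 1 := by
    intro w
    rcases Int.units_eq_one_or (Equiv.Perm.sign w) with h | h <;> simp [h]
  have hsumO : ∑ c ∈ O, MM N V c ^ 2 = N.factorial * MM N V b ^ 2 := by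
    rw [Finset.sum_image (fun w _ w' _ h => comp_inj hinj h)]
    simp only [MM_comp, mul_pow, hs, one_mul]
    rw [Finset.sum_const, nsmul_eq_mul, Finset.card_univ, Fintype.card_perm, Fintype.card_fin]
  have horth := MM_orth hN V
  rw [← Finset.sum_sdiff hO, hsumO] at horth
  have hnn : 0 ≤ ∑ c ∈ Bx N n \ O, MM N V c ^ 2 := Finset.sum_nonneg fun _ _ => sq_nonneg _
  have hfp : (0 : ℤ) < N.factorial := by exact_mod_cast N.factorial_pos
  have hsq : 0 < MM N V b ^ 2 := by positivity
  have hone : MM N V b ^ 2 = 1 := by nlinarith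
  rw [hone, mul_one] at horth
  have hz : ∑ c ∈ Bx N n \ O, MM N V c ^ 2 = 0 := by linarith
  rw [Finset.sum_eq_zero_iff_of_nonneg (fun _ _ => sq_nonneg _)] at hz
  refine ⟨hinj, hbx, hone, ?_, ?_⟩
  · intro b' hb' h
    by_contra! hne
    refine h (pow_eq_zero_iff (two_ne_zero) |>.mp (hz b' (Finset.mem_sdiff.mpr ⟨hb', ?_⟩)))
    intro hc
    obtain ⟨w, _, hw⟩ := Finset.mem_image.mp hc
    exact hne w hw.symm
  · intro g
    have h2 := sum_chi_MM hN V g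
    rw [← Finset.sum_sdiff hO, Finset.sum_eq_zero, zero_add,
      Finset.sum_image (fun w _ w' _ h => comp_inj hinj h)] at h2
    · have h3 : ∀ w ∈ (Finset.univ : Finset (Equiv.Perm (Fin N))),
          (chi N (b ∘ w) g : ℂ) * MM N V (b ∘ w) = (MM N V b * chi N b g : ℂ) := by
        intro w _
        rw [chi_comp, MM_comp]
        have : (((Equiv.Perm.sign w : ℤ) ^ 2 : ℤ) : ℂ) = 1 := by rw [hs]; simp
        push_cast at this ⊢
        linear_combination (chi N b g * MM N V b : ℂ) * this
      rw [Finset.sum_congr rfl h3, Finset.sum_const, nsmul_eq_mul, Finset.card_univ, Fintype.card_perm, Fintype.card_fin] at h2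
      have h4 : (N.factorial : ℂ) ≠ 0 := Nat.cast_ne_zero.mpr N.factorial_ne_zero
      exact (mul_left_cancel₀ h4 h2).symm
    · intro c hc
      have := hz c hc
      rw [pow_eq_zero_iff two_ne_zero] at this
      rw [this]; simp

lemma exists_V {N n : ℕ} {b : Fin N → ℕ} (hb : chi N b (1 : Equiv.Perm (Fin n)) ≠ 0) :
    ∃ V : FDRep ℂ (Equiv.Perm (Fin n)), CategoryTheory.Simple V ∧ MM N V b ≠ 0 := by
  by_contra! h
  have := classfun_eq_zero (fun g : Equiv.Perm (Fin n) => (chi N b g : ℂ)) (by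
    intro g h
    rw [chi_conj b (isConj_iff.mpr ⟨h, rfl⟩ : IsConj g (h * g * h⁻¹))]) (by
    intro V hV
    have h1 := MM_spec N V b
    rw [h V hV] at h1
    have h2 : ∀ g : Equiv.Perm (Fin n), V.character g⁻¹ = V.character g := fun g =>
      (char_isConj V (isConj_inv g)).symm
    simp only [h2] at h1
    have h3 := card_perm_ne n
    simpa [h3] using h1.symm)
  have h1 := congrFun this 1
  simp only [Pi.zero_apply, Int.cast_eq_zero] at h1
  exact hb h1

/-- The set of labels with degree prime to three. -/
def SS (N n : ℕ) : Finset (Fin N → ℕ) :=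
  (Bx N n).filter (fun b => ¬ (3 : ℤ) ∣ chi N b (1 : Equiv.Perm (Fin n)))

lemma char_one_eq {N n : ℕ} (hN : 2 * n ≤ N) (V : FDRep ℂ (Equiv.Perm (Fin n)))
    [CategoryTheory.Simple V] {b : Fin N → ℕ} (hb : MM N V b ≠ 0) :
    ((Module.finrank ℂ V : ℕ) : ℤ) = MM N V b * chi N b (1 : Equiv.Perm (Fin n)) := by
  have h := (MM_struct hN V hb).2.2.2.2 1
  rw [FDRep.char_one] at h
  exact_mod_cast h

lemma coprime_iff {N n : ℕ} (hN : 2 * n ≤ N) (V : FDRep ℂ (Equiv.Perm (Fin n)))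
    [CategoryTheory.Simple V] {b : Fin N → ℕ} (hb : MM N V b ≠ 0) :
    Nat.Coprime (Module.finrank ℂ V) 3 ↔ ¬ (3 : ℤ) ∣ chi N b (1 : Equiv.Perm (Fin n)) := by
  have h := char_one_eq hN V hb
  have h1 := (MM_struct hN V hb).2.2.1
  rw [Nat.coprime_comm, Nat.Prime.coprime_iff_not_dvd Nat.prime_three, not_iff_not,
    ← Int.natCast_dvd_natCast, h]
  rcases sq_eq_one_cases h1 with h2 | h2 <;> simp [h2]

lemma card_SS {N n : ℕ} (hN : 2 * n ≤ N) : Finite (IrrCoprime 3 (Equiv.Perm (Fin n))) ∧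
    Nat.card (IrrCoprime 3 (Equiv.Perm (Fin n))) * N.factorial = (SS N n).card := by
  have hex : ∀ ψ : IrrCoprime 3 (Equiv.Perm (Fin n)), ∃ (V : FDRep ℂ (Equiv.Perm (Fin n))) (b : Fin N → ℕ),
      CategoryTheory.Simple V ∧ FDRep.character V = ψ.1 ∧ Nat.Coprime (Module.finrank ℂ V) 3 ∧ MM N V b ≠ 0 := by
    rintro ⟨ψ, V, hV, hc, hd⟩
    obtain ⟨b, _, hb⟩ := exists_MM hN V
    exact ⟨V, b, hV, hc, hd, hb⟩
  choose V β hV hVc hVd hβ using hex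
  have hmem : ∀ ψ (w : Equiv.Perm (Fin N)), β ψ ∘ w ∈ SS N n := by
    intro ψ w
    have := hV ψ
    have h1 := (coprime_iff hN (V ψ) (b := β ψ ∘ w) (by rw [MM_comp]; simp [hβ ψ])).mp (hVd ψ)
    exact Finset.mem_filter.mpr ⟨Bx_comp (MM_struct hN (V ψ) (hβ ψ)).2.1 w, h1⟩
  let Φ : IrrCoprime 3 (Equiv.Perm (Fin n)) × Equiv.Perm (Fin N) → SS N n := fun p => ⟨β p.1 ∘ p.2, hmem p.1 p.2⟩
  have hΦ : Function.Bijective Φ := by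
    constructor
    · rintro ⟨ψ, w⟩ ⟨ψ', w'⟩ h
      have h : β ψ ∘ w = β ψ' ∘ w' := congrArg Subtype.val h
      have := hV ψ
      have := hV ψ'
      have hM : MM N (V ψ) (β ψ ∘ w) ≠ 0 := by rw [MM_comp]; simp [hβ ψ]
      have hM' : MM N (V ψ') (β ψ ∘ w) ≠ 0 := by rw [h, MM_comp]; simp [hβ ψ']
      have s1 := MM_struct hN (V ψ) hM
      have s2 := MM_struct hN (V ψ') hM'
      have d1 := char_one_eq hN (V ψ) hM
      have d2 := char_one_eq hN (V ψ') hM'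
      have hc : ¬ (3 : ℤ) ∣ chi N (β ψ ∘ w) (1 : Equiv.Perm (Fin n)) := (coprime_iff hN _ hM).mp (hVd ψ)
      have hc0 : chi N (β ψ ∘ w) (1 : Equiv.Perm (Fin n)) ≠ 0 := fun h => hc (by rw [h]; simp)
      have hMM : MM N (V ψ) (β ψ ∘ w) = MM N (V ψ') (β ψ ∘ w) := by
        rcases sq_eq_one_cases s1.2.2.1 with h2 | h2 <;>
        rcases sq_eq_one_cases s2.2.2.1 with h3 | h3 <;> rw [h2] at d1 ⊢ <;> rw [h3] at d2 ⊢ <;> omega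
      have hψ : ψ = ψ' := by
        apply Subtype.ext
        rw [← hVc ψ, ← hVc ψ']
        funext g
        rw [s1.2.2.2.2, s2.2.2.2.2, hMM]
      subst hψ
      have := comp_inj (MM_struct hN (V ψ) (hβ ψ)).1 h
      rw [this]
    · rintro ⟨b, hb⟩
      obtain ⟨hb1, hb2⟩ := Finset.mem_filter.mp hb
      obtain ⟨W, hW, hM⟩ := exists_V (N := N) (n := n) (b := b) (fun h => hb2 (by rw [h]; simp))
      have hWc := (coprime_iff hN W hM).mpr hb2
      let ψ : IrrCoprime 3 (Equiv.Perm (Fin n)) := ⟨W.character, W, hW, rfl, hWc⟩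
      have := hV ψ
      have hc : (V ψ).character = W.character := hVc ψ
      obtain ⟨w, hw⟩ := (MM_struct hN (V ψ) (hβ ψ)).2.2.2.1 b hb1 (by rwa [MM_congr hc])
      exact ⟨(ψ, w), Subtype.ext hw.symm⟩
  let E := Equiv.ofBijective Φ hΦ
  constructor
  · have : Finite (IrrCoprime 3 (Equiv.Perm (Fin n)) × Equiv.Perm (Fin N)) := Finite.of_equiv _ E.symm
    exact Finite.of_surjective (Prod.fst : (IrrCoprime 3 (Equiv.Perm (Fin n)) × Equiv.Perm (Fin N)) → _) Prod.fst_surjective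
  · have := Nat.card_congr E
    rw [Nat.card_prod, Nat.card_perm, Nat.card_fin] at this
    rw [this]
    simp

/-- Positions at which `q` can be subtracted. -/
def Dn {N : ℕ} (q : ℕ) (b : Fin N → ℕ) : Finset (Fin N) :=
  Finset.univ.filter (fun i => q ≤ b i ∧ ∀ j, b j ≠ b i - q)

/-- Positions at which `q` can be added. -/
def Up {N : ℕ} (q : ℕ) (b : Fin N → ℕ) : Finset (Fin N) :=
  Finset.univ.filter (fun i => ∀ j, b j ≠ b i + q)

/-- Subtract `q` at position `i`. -/
def dn {N : ℕ} (q : ℕ) (b : Fin N → ℕ) (i : Fin N) : Fin N → ℕ := Function.update b i (b i - q)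

/-- Add `q` at position `i`. -/
def up {N : ℕ} (q : ℕ) (b : Fin N → ℕ) (i : Fin N) : Fin N → ℕ := Function.update b i (b i + q)

lemma mem_Dn {N q : ℕ} {b : Fin N → ℕ} {i : Fin N} :
    i ∈ Dn q b ↔ q ≤ b i ∧ ∀ j, b j ≠ b i - q := by simp [Dn]

lemma mem_Up {N q : ℕ} {b : Fin N → ℕ} {i : Fin N} :
    i ∈ Up q b ↔ ∀ j, b j ≠ b i + q := by simp [Up]

lemma dn_same {N q : ℕ} (b : Fin N → ℕ) (i : Fin N) : dn q b i i = b i - q := by simp [dn]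
lemma dn_ne {N q : ℕ} (b : Fin N → ℕ) {i j : Fin N} (h : j ≠ i) : dn q b i j = b j := by simp [dn, h]
lemma up_same {N q : ℕ} (b : Fin N → ℕ) (i : Fin N) : up q b i i = b i + q := by simp [up]
lemma up_ne {N q : ℕ} (b : Fin N → ℕ) {i j : Fin N} (h : j ≠ i) : up q b i j = b j := by simp [up, h]

lemma dn_up {N q : ℕ} (b : Fin N → ℕ) (i : Fin N) : dn q (up q b i) i = b := by
  simp [dn, up]

lemma up_dn {N q : ℕ} {b : Fin N → ℕ} {i : Fin N} (h : q ≤ b i) : up q (dn q b i) i = b := by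
  simp [dn, up, h]

lemma dn_comm {N q : ℕ} (b : Fin N → ℕ) {i j : Fin N} (h : i ≠ j) : dn q (dn q b i) j = dn q (dn q b j) i := by
  simp only [dn, Function.update_of_ne h, Function.update_of_ne h.symm]
  rw [Function.update_comm h]

lemma up_comm {N q : ℕ} (b : Fin N → ℕ) {i j : Fin N} (h : i ≠ j) : up q (up q b i) j = up q (up q b j) i := by
  simp only [up, Function.update_of_ne h, Function.update_of_ne h.symm]
  rw [Function.update_comm h]

lemma sum_dn {N q : ℕ} {b : Fin N → ℕ} {i : Fin N} (h : q ≤ b i) : ∑ j, dn q b i j + q = ∑ j, b j := by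
  rw [dn, Finset.sum_update_of_mem (Finset.mem_univ i), ← Finset.sum_sdiff (Finset.subset_univ {i}) (f := b)]
  simp
  omega

lemma sum_up {N q : ℕ} (b : Fin N → ℕ) (i : Fin N) : ∑ j, up q b i j = ∑ j, b j + q := by
  have := sum_dn (q := q) (b := up q b i) (i := i) (by rw [up_same]; omega)
  rw [dn_up] at this
  exact this.symm

lemma inj_upd {N : ℕ} {b : Fin N → ℕ} (hb : Function.Injective b) (i : Fin N) (x : ℕ)
    (hx : ∀ j, j ≠ i → b j ≠ x) : Function.Injective (Function.update b i x) := by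
  intro j k h
  by_cases hj : j = i <;> by_cases hk : k = i
  · rw [hj, hk]
  · subst hj; rw [Function.update_self, Function.update_of_ne hk] at h; exact absurd h.symm (hx k hk)
  · subst hk; rw [Function.update_self, Function.update_of_ne hj] at h; exact absurd h (hx j hj)
  · rw [Function.update_of_ne hj, Function.update_of_ne hk] at h; exact hb h

lemma inj_dn {N q : ℕ} {b : Fin N → ℕ} (hb : Function.Injective b) {i : Fin N} (hi : i ∈ Dn q b) :
    Function.Injective (dn q b i) := inj_upd hb i _ (fun j _ => (mem_Dn.mp hi).2 j)

lemma inj_up {N q : ℕ} {b : Fin N → ℕ} (hb : Function.Injective b) {i : Fin N} (hi : i ∈ Up q b) :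
    Function.Injective (up q b i) := inj_upd hb i _ (fun j _ => mem_Up.mp hi j)

lemma mem_Up_dn {N q : ℕ} (hq : 0 < q) {b : Fin N → ℕ} (hb : Function.Injective b) {i : Fin N}
    (hi : i ∈ Dn q b) : i ∈ Up q (dn q b i) := by
  rw [mem_Dn] at hi
  rw [mem_Up]
  intro j
  by_cases hj : j = i
  · subst hj; omega
  · rw [dn_same, dn_ne b hj]
    intro h
    exact hj (hb (by omega))

lemma mem_Dn_up {N q : ℕ} (hq : 0 < q) {b : Fin N → ℕ} (hb : Function.Injective b) {i : Fin N} :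
    i ∈ Dn q (up q b i) := by
  rw [mem_Dn, up_same]
  refine ⟨by omega, ?_⟩
  intro j
  by_cases hj : j = i
  · subst hj; rw [up_same]; omega
  · rw [up_ne b hj]
    intro h
    exact hj (hb (by omega))

lemma mem_Dn_dn {N q : ℕ} {b : Fin N → ℕ} (hb : Function.Injective b) {i j : Fin N}
    (hij : j ≠ i) (hi : i ∈ Dn q b) (hj : j ∈ Dn q b) : j ∈ Dn q (dn q b i) := by
  rw [mem_Dn] at *
  rw [dn_ne b hij]
  refine ⟨hj.1, ?_⟩
  intro k
  by_cases hk : k = i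
  · subst hk; rw [dn_same]; intro h; exact hij (hb (by omega))
  · rw [dn_ne b hk]; exact hj.2 k

lemma mem_Up_up {N q : ℕ} {b : Fin N → ℕ} (hb : Function.Injective b) {i j : Fin N}
    (hij : j ≠ i) (hj : j ∈ Up q b) : j ∈ Up q (up q b i) := by
  rw [mem_Up] at *
  rw [up_ne b hij]
  intro k
  by_cases hk : k = i
  · subst hk; rw [up_same]; intro h; exact hij (hb (by omega))
  · rw [up_ne b hk]; exact hj k

lemma Dn_card {N q d : ℕ} {b : Fin N → ℕ} (hb : Function.Injective b) (hs : ∑ i, b i = d + triN N) :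
    q * (Dn q b).card ≤ d := by
  let c : Fin N → ℕ := fun i => if i ∈ Dn q b then b i - q else b i
  have hc : Function.Injective c := by
    intro i j h
    simp only [c] at h
    split_ifs at h with h1 h2 h2
    · rw [mem_Dn] at h1 h2; exact hb (by omega)
    · rw [mem_Dn] at h1; exact absurd h.symm (h1.2 j)
    · rw [mem_Dn] at h2; exact absurd h (h2.2 i)
    · exact hb h
  have h1 := inj_sum_ge c hc
  have h2 : ∑ i, b i = ∑ i, c i + ∑ i, (if i ∈ Dn q b then q else 0) := by
    rw [← Finset.sum_add_distrib]
    refine Finset.sum_congr rfl fun i _ => ?_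
    simp only [c]
    split_ifs with h
    · rw [mem_Dn] at h; omega
    · simp
  rw [Finset.sum_ite_mem, Finset.univ_inter, Finset.sum_const, smul_eq_mul, mul_comm] at h2
  omega

lemma Up_card {N q d : ℕ} {b : Fin N → ℕ} (hb : Function.Injective b) (hs : ∑ i, b i = d + triN N)
    (hN : q + d ≤ N) : (Up q b).card = (Dn q b).card + q := by
  have h1 : (Up q b).card + (Finset.univ.filter (fun i => ¬ ∀ j, b j ≠ b i + q)).card = N := by
    rw [Up, Finset.card_filter_add_card_filter_not]
    simp
  have h2 : (Finset.univ.filter (fun i => q ≤ b i)).card + (Finset.univ.filter (fun i => ¬ q ≤ b i)).card = N := by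
    rw [Finset.card_filter_add_card_filter_not]
    simp
  have h3 : (Finset.univ.filter (fun i => ¬ q ≤ b i)).card = q := by
    conv_rhs => rw [← Finset.card_range q]
    refine Finset.card_bij (fun i _ => b i) ?_ ?_ ?_
    · intro i hi
      simpa using hi
    · intro i _ j _ h
      exact hb h
    · intro v hv
      rw [Finset.mem_range] at hv
      obtain ⟨i, hi⟩ := inj_small b hb hs v (by omega)
      exact ⟨i, by simp [hi, hv], hi⟩
  have h4 : (Finset.univ.filter (fun i => q ≤ b i)).card = (Dn q b).card +
      (Finset.univ.filter (fun i => q ≤ b i ∧ ¬ ∀ j, b j ≠ b i - q)).card := by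
    rw [Dn, ← Finset.filter_filter, ← Finset.filter_filter, Finset.card_filter_add_card_filter_not]
  have h5 : (Finset.univ.filter (fun i => q ≤ b i ∧ ¬ ∀ j, b j ≠ b i - q)).card =
      (Finset.univ.filter (fun i => ¬ ∀ j, b j ≠ b i + q)).card := by
    symm
    have hch : ∀ i, i ∈ (Finset.univ.filter (fun i => ¬ ∀ j, b j ≠ b i + q)) → ∃ j, b j = b i + q := by
      intro i hi
      simpa using hi
    choose f hf using hch
    refine Finset.card_bij f ?_ ?_ ?_
    · intro i hi
      have := hf i hi
      simp only [Finset.mem_filter, Finset.mem_univ, true_and]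
      refine ⟨by omega, ?_⟩
      push Not
      exact ⟨i, by omega⟩
    · intro i hi j hj h
      have h1 := hf i hi
      have h2 := hf j hj
      rw [h] at h1
      exact hb (by omega)
    · intro j hj
      simp only [Finset.mem_filter, Finset.mem_univ, true_and] at hj
      push Not at hj
      obtain ⟨hj, i, hi⟩ := hj
      have hm : i ∈ (Finset.univ.filter (fun i => ¬ ∀ j, b j ≠ b i + q)) := by
        simp only [Finset.mem_filter, Finset.mem_univ, true_and]
        push Not
        exact ⟨j, by omega⟩
      refine ⟨i, hm, hb ?_⟩
      have := hf i hm
      omega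
  omega

lemma step1 {N q : ℕ} (hq : 0 < q) (A B : Finset (Fin N → ℕ)) (hA : ∀ γ ∈ A, Function.Injective γ)
    (hB : ∀ b ∈ B, Function.Injective b) (h1 : ∀ b ∈ B, ∀ i ∈ Dn q b, dn q b i ∈ A)
    (h2 : ∀ γ ∈ A, ∀ i ∈ Up q γ, up q γ i ∈ B) :
    ∑ b ∈ B, (Dn q b).card = ∑ γ ∈ A, (Up q γ).card := by
  rw [← Finset.card_sigma, ← Finset.card_sigma]
  refine Finset.card_bij' (fun p _ => ⟨dn q p.1 p.2, p.2⟩) (fun p _ => ⟨up q p.1 p.2, p.2⟩) ?_ ?_ ?_ ?_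
  · rintro ⟨b, i⟩ h
    obtain ⟨hb, hi⟩ := Finset.mem_sigma.mp h
    exact Finset.mem_sigma.mpr ⟨h1 b hb i hi, mem_Up_dn hq (hB b hb) hi⟩
  · rintro ⟨b, i⟩ h
    obtain ⟨hb, hi⟩ := Finset.mem_sigma.mp h
    exact Finset.mem_sigma.mpr ⟨h2 b hb i hi, mem_Dn_up hq (hA b hb)⟩
  · rintro ⟨b, i⟩ h
    obtain ⟨hb, hi⟩ := Finset.mem_sigma.mp h
    simp only [up_dn (mem_Dn.mp hi).1]
  · rintro ⟨b, i⟩ h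
    simp only [dn_up]

lemma step2 {N q : ℕ} (hq : 0 < q) (A B : Finset (Fin N → ℕ)) (hA : ∀ γ ∈ A, Function.Injective γ)
    (hB : ∀ b ∈ B, Function.Injective b)
    (h1 : ∀ b ∈ B, ∀ i ∈ Dn q b, ∀ j ∈ Dn q b, i ≠ j → dn q (dn q b i) j ∈ A)
    (h2 : ∀ γ ∈ A, ∀ i ∈ Up q γ, ∀ j ∈ Up q γ, i ≠ j → up q (up q γ i) j ∈ B) :
    ∑ b ∈ B, (Dn q b).offDiag.card = ∑ γ ∈ A, (Up q γ).offDiag.card := by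
  rw [← Finset.card_sigma, ← Finset.card_sigma]
  refine Finset.card_bij' (fun p _ => ⟨dn q (dn q p.1 p.2.1) p.2.2, p.2⟩)
    (fun p _ => ⟨up q (up q p.1 p.2.1) p.2.2, p.2⟩) ?_ ?_ ?_ ?_
  · rintro ⟨b, i, j⟩ h
    obtain ⟨hb, hij⟩ := Finset.mem_sigma.mp h
    obtain ⟨hi, hj, hne⟩ := Finset.mem_offDiag.mp hij
    refine Finset.mem_sigma.mpr ⟨h1 b hb i hi j hj hne, Finset.mem_offDiag.mpr ⟨?_, ?_, hne⟩⟩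
    · simp only
      rw [dn_comm b hne]
      exact mem_Up_dn hq (inj_dn (hB b hb) hj) (mem_Dn_dn (hB b hb) hne hj hi)
    · exact mem_Up_dn hq (inj_dn (hB b hb) hi) (mem_Dn_dn (hB b hb) hne.symm hi hj)
  · rintro ⟨b, i, j⟩ h
    obtain ⟨hb, hij⟩ := Finset.mem_sigma.mp h
    obtain ⟨hi, hj, hne⟩ := Finset.mem_offDiag.mp hij
    refine Finset.mem_sigma.mpr ⟨h2 b hb i hi j hj hne, Finset.mem_offDiag.mpr ⟨?_, ?_, hne⟩⟩
    · simp only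
      rw [up_comm b hne]
      exact mem_Dn_up hq (inj_up (hA b hb) hj)
    · exact mem_Dn_up hq (inj_up (hA b hb) hi)
  · rintro ⟨b, i, j⟩ h
    obtain ⟨hb, hij⟩ := Finset.mem_sigma.mp h
    obtain ⟨hi, hj, hne⟩ := Finset.mem_offDiag.mp hij
    have hne : i ≠ j := hne
    have e1 : up q (dn q (dn q b j) i) i = dn q b j :=
      up_dn (by rw [dn_ne b hne]; exact (mem_Dn.mp hi).1)
    have e2 : up q (dn q b j) j = b := up_dn (mem_Dn.mp hj).1
    simp only
    rw [dn_comm b hne, e1, e2]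
  · rintro ⟨b, i, j⟩ h
    obtain ⟨hb, hij⟩ := Finset.mem_sigma.mp h
    obtain ⟨hi, hj, hne⟩ := Finset.mem_offDiag.mp hij
    have hne : i ≠ j := hne
    simp only
    rw [up_comm b hne, dn_up, dn_up]

/-- Labels with nonzero coefficient modulo three. -/
def TT {N : ℕ} (F : MvPolynomial (Fin N) ℤ) (d : ℕ) : Finset (Fin N → ℕ) :=
  (Bx N d).filter (fun b => ((cf F b : ℤ) : ZMod 3) ≠ 0)

lemma mem_TT {N d : ℕ} {F : MvPolynomial (Fin N) ℤ} (h : Good F d) {b : Fin N → ℕ} :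
    b ∈ TT F d ↔ ((cf F b : ℤ) : ZMod 3) ≠ 0 := by
  rw [TT, Finset.mem_filter]
  refine ⟨fun h => h.2, fun hb => ⟨h.mem_Bx fun h0 => hb (by rw [h0]; simp), hb⟩⟩

lemma TT_inj {N d : ℕ} {F : MvPolynomial (Fin N) ℤ} (h : Good F d) {b : Fin N → ℕ} (hb : b ∈ TT F d) :
    Function.Injective b := h.inj fun h0 => (mem_TT h).mp hb (by rw [h0]; simp)

lemma TT_sum {N d : ℕ} {F : MvPolynomial (Fin N) ℤ} (h : Good F d) {b : Fin N → ℕ} (hb : b ∈ TT F d) :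
    ∑ i, b i = d + triN N := h.deg fun h0 => (mem_TT h).mp hb (by rw [h0]; simp)

lemma cf_Dn {N d q : ℕ} (hq : 0 < q) {F : MvPolynomial (Fin N) ℤ} (h : Good F d) {b : Fin N → ℕ} :
    cf (MvPolynomial.psum (Fin N) ℤ q * F) b = ∑ i ∈ Dn q b, cf F (dn q b i) := by
  rw [cf_psum_mul, ← Finset.sum_filter]
  symm
  refine Finset.sum_subset ?_ ?_
  · intro i hi
    rw [mem_Dn] at hi
    simpa using hi.1
  · intro i hi hn
    rw [mem_Dn] at hn
    have hi : q ≤ b i := by simpa using hi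
    by_contra h0
    apply hn
    refine ⟨hi, fun j hj => ?_⟩
    have hinj := h.inj h0
    have hne : j ≠ i := by rintro rfl; omega
    exact hne (hinj (by rw [dn_same, dn_ne b hne]; exact hj))

lemma card_step1 {N r q : ℕ} (hr : r < q) (hN : 2 * (q + r) ≤ N) {F : MvPolynomial (Fin N) ℤ} (h : Good F r) :
    (TT (MvPolynomial.psum (Fin N) ℤ q * F) (q + r)).card = q * (TT F r).card ∧
    (∀ b ∈ TT (MvPolynomial.psum (Fin N) ℤ q * F) (q + r), (Dn q b).card = 1) ∧
    (∀ b, Function.Injective b → ∑ i, b i = (q + r) + triN N → ∀ i ∈ Dn q b,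
      cf (MvPolynomial.psum (Fin N) ℤ q * F) b = cf F (dn q b i)) := by
  have hq : 0 < q := by omega
  have h' := h.psum_mul q
  have hle : ∀ b : Fin N → ℕ, Function.Injective b → ∑ i, b i = (q + r) + triN N → (Dn q b).card ≤ 1 := by
    intro b hb hs
    have := Dn_card (q := q) hb hs
    by_contra! h2
    have : q * 2 ≤ q * (Dn q b).card := Nat.mul_le_mul_left _ h2
    omega
  have hval : ∀ b, Function.Injective b → ∑ i, b i = (q + r) + triN N → ∀ i ∈ Dn q b,
      cf (MvPolynomial.psum (Fin N) ℤ q * F) b = cf F (dn q b i) := by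
    intro b hb hs i hi
    have h1 := hle b hb hs
    have : Dn q b = {i} := by
      refine (Finset.eq_singleton_iff_unique_mem).mpr ⟨hi, fun j hj => ?_⟩
      exact Finset.card_le_one.mp h1 j hj i hi
    rw [cf_Dn hq h, this, Finset.sum_singleton]
  have hone : ∀ b ∈ TT (MvPolynomial.psum (Fin N) ℤ q * F) (q + r), (Dn q b).card = 1 := by
    intro b hb
    have h1 := hle b (TT_inj h' hb) (TT_sum h' hb)
    have h2 : (Dn q b).card ≠ 0 := by
      intro h0
      have := (mem_TT h').mp hb
      rw [cf_Dn hq h, Finset.card_eq_zero.mp h0] at this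
      simp at this
    omega
  refine ⟨?_, hone, hval⟩
  have hs := step1 hq (TT F r) (TT (MvPolynomial.psum (Fin N) ℤ q * F) (q + r))
    (fun _ => TT_inj h) (fun _ => TT_inj h') (by
      intro b hb i hi
      rw [mem_TT h, ← hval b (TT_inj h' hb) (TT_sum h' hb) i hi]
      exact (mem_TT h').mp hb) (by
      intro γ hγ i hi
      rw [mem_TT h', hval _ (inj_up (TT_inj h hγ) hi) (by rw [sum_up, TT_sum h hγ]; ring) i (mem_Dn_up hq (TT_inj h hγ)), dn_up]
      exact (mem_TT h).mp hγ)
  rw [Finset.sum_congr rfl hone, Finset.sum_const, smul_eq_mul, mul_one] at hs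
  rw [hs]
  have h0 : ∀ γ ∈ TT F r, (Up q γ).card = q := by
    intro γ hγ
    rw [Up_card (TT_inj h hγ) (TT_sum h hγ) (by omega)]
    have := Dn_card (q := q) (TT_inj h hγ) (TT_sum h hγ)
    have h1 : (Dn q γ).card = 0 := by
      by_contra h2
      have : q * 1 ≤ q * (Dn q γ).card := Nat.mul_le_mul_left _ (by omega)
      omega
    omega
  rw [Finset.sum_congr rfl h0, Finset.sum_const, smul_eq_mul, mul_comm]

lemma card_step2 {N r q : ℕ} (hr : r < q) (hN : 2 * (q + (q + r)) ≤ N) {F : MvPolynomial (Fin N) ℤ} (h : Good F r) :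
    2 * (TT (MvPolynomial.psum (Fin N) ℤ q * (MvPolynomial.psum (Fin N) ℤ q * F)) (q + (q + r))).card =
      q * (q + 3) * (TT F r).card := by
  have hq : 0 < q := by omega
  have h' := h.psum_mul q
  have h'' := h'.psum_mul q
  obtain ⟨c1, c2, c3⟩ := card_step1 hr (by omega) h
  set F' := MvPolynomial.psum (Fin N) ℤ q * F
  set F'' := MvPolynomial.psum (Fin N) ℤ q * F'
  have hle : ∀ b : Fin N → ℕ, Function.Injective b → ∑ i, b i = (q + (q + r)) + triN N → (Dn q b).card ≤ 2 := by
    intro b hb hs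
    have := Dn_card (q := q) hb hs
    by_contra! h2
    have : q * 3 ≤ q * (Dn q b).card := Nat.mul_le_mul_left _ h2
    omega
  have hdd : ∀ b, Function.Injective b → ∑ i, b i = (q + (q + r)) + triN N → ∀ i ∈ Dn q b, ∀ j ∈ Dn q b,
      i ≠ j → cf F' (dn q b i) = cf F (dn q (dn q b i) j) := by
    intro b hb hs i hi j hj hne
    refine c3 _ (inj_dn hb hi) ?_ j (mem_Dn_dn hb hne.symm hi hj)
    have := sum_dn (mem_Dn.mp hi).1
    omega
  have heq : ∀ b, Function.Injective b → ∑ i, b i = (q + (q + r)) + triN N → ∀ i ∈ Dn q b, ∀ j ∈ Dn q b,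
      cf F' (dn q b j) = cf F' (dn q b i) := by
    intro b hb hs i hi j hj
    by_cases hne : i = j
    · rw [hne]
    · rw [hdd b hb hs i hi j hj hne, hdd b hb hs j hj i hi (Ne.symm hne), dn_comm b hne]
  have hval : ∀ b, Function.Injective b → ∑ i, b i = (q + (q + r)) + triN N → ∀ i ∈ Dn q b,
      ((((cf F'' b : ℤ) : ZMod 3) ≠ 0) ↔ ((cf F' (dn q b i) : ℤ) : ZMod 3) ≠ 0) := by
    intro b hb hs i hi
    rw [cf_Dn hq h', Finset.sum_congr rfl (heq b hb hs i hi), Finset.sum_const, nsmul_eq_mul]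
    have h1 := hle b hb hs
    have h2 : 0 < (Dn q b).card := Finset.card_pos.mpr ⟨i, hi⟩
    push_cast
    rw [mul_ne_zero_iff]
    refine ⟨fun h => h.2, fun h => ⟨?_, h⟩⟩
    interval_cases (Dn q b).card
    · decide
    · decide
  have hpos : ∀ b ∈ TT F'' (q + (q + r)), 0 < (Dn q b).card := by
    intro b hb
    rw [Nat.pos_iff_ne_zero]
    intro h0
    have := (mem_TT h'').mp hb
    rw [cf_Dn hq h', Finset.card_eq_zero.mp h0] at this
    simp at this
  have s1 := step1 hq (TT F' (q + r)) (TT F'' (q + (q + r)))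
    (fun _ => TT_inj h') (fun _ => TT_inj h'') (by
      intro b hb i hi
      rw [mem_TT h', ← hval b (TT_inj h'' hb) (TT_sum h'' hb) i hi]
      exact (mem_TT h'').mp hb) (by
      intro γ hγ i hi
      rw [mem_TT h'', hval _ (inj_up (TT_inj h' hγ) hi) (by rw [sum_up, TT_sum h' hγ]; ring) i (mem_Dn_up hq (TT_inj h' hγ)), dn_up]
      exact (mem_TT h').mp hγ)
  have s2 := step2 hq (TT F r) (TT F'' (q + (q + r)))
    (fun _ => TT_inj h) (fun _ => TT_inj h'') (by
      intro b hb i hi j hj hne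
      rw [mem_TT h, ← hdd b (TT_inj h'' hb) (TT_sum h'' hb) i hi j hj hne, ← hval b (TT_inj h'' hb) (TT_sum h'' hb) i hi]
      exact (mem_TT h'').mp hb) (by
      intro γ hγ i hi j hj hne
      have i1 := inj_up (TT_inj h hγ) hi
      have i2 := inj_up i1 (mem_Up_up (TT_inj h hγ) hne.symm hj)
      have t1 : ∑ k, up q γ i k = (q + r) + triN N := by rw [sum_up, TT_sum h hγ]; ring
      have t2 : ∑ k, up q (up q γ i) j k = (q + (q + r)) + triN N := by rw [sum_up, t1]; ring
      rw [mem_TT h'', hval _ i2 t2 j (mem_Dn_up hq i1), dn_up, c3 _ i1 t1 i (mem_Dn_up hq (TT_inj h hγ)), dn_up]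
      exact (mem_TT h).mp hγ)
  have u1 : ∀ γ ∈ TT F' (q + r), (Up q γ).card = q + 1 := by
    intro γ hγ
    rw [Up_card (TT_inj h' hγ) (TT_sum h' hγ) (by omega), c2 γ hγ]
    ring
  have u0 : ∀ γ ∈ TT F r, (Up q γ).offDiag.card = q * q - q := by
    intro γ hγ
    rw [Finset.offDiag_card, Up_card (TT_inj h hγ) (TT_sum h hγ) (by omega)]
    have := Dn_card (q := q) (TT_inj h hγ) (TT_sum h hγ)
    have h1 : (Dn q γ).card = 0 := by
      by_contra h2
      have : q * 1 ≤ q * (Dn q γ).card := Nat.mul_le_mul_left _ (by omega)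
      omega
    rw [h1, zero_add]
  rw [Finset.sum_congr rfl u1, Finset.sum_const, smul_eq_mul, c1] at s1
  rw [Finset.sum_congr rfl u0, Finset.sum_const, smul_eq_mul] at s2
  have s3 : 2 * (TT F'' (q + (q + r))).card + ∑ b ∈ TT F'' (q + (q + r)), (Dn q b).offDiag.card =
      2 * ∑ b ∈ TT F'' (q + (q + r)), (Dn q b).card := by
    rw [mul_comm 2 (Finset.card _), ← smul_eq_mul, ← Finset.sum_const, ← Finset.sum_add_distrib, Finset.mul_sum]
    refine Finset.sum_congr rfl fun b hb => ?_
    have h1 := hle b (TT_inj h'' hb) (TT_sum h'' hb)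
    have h2 := hpos b hb
    rw [Finset.offDiag_card]
    interval_cases (Dn q b).card <;> rfl
  rw [s1, s2] at s3
  obtain ⟨q', rfl⟩ : ∃ q', q = q' + 1 := ⟨q - 1, by omega⟩
  have : (q' + 1) * (q' + 1) - (q' + 1) = (q' + 1) * q' := by
    rw [Nat.mul_succ]; omega
  rw [this] at s3
  nlinarith

/-- The polynomial whose coefficients are the degrees. -/
def FF (N d : ℕ) : MvPolynomial (Fin N) ℤ := MvPolynomial.psum (Fin N) ℤ 1 ^ d * vand N

lemma FF_eq (N d : ℕ) : FF N d = Pm N (Multiset.replicate d 1) := by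
  rw [FF, Pm, Multiset.map_replicate, Multiset.prod_replicate]

lemma FF_good (N d : ℕ) : Good (FF N d) d := by
  have := Pm_good N (Multiset.replicate d 1)
  rw [← FF_eq] at this
  simpa using this

lemma SS_eq (N n : ℕ) : SS N n = TT (FF N n) n := by
  rw [SS, TT]
  refine Finset.filter_congr fun b _ => ?_
  rw [chi, cyc_one, ← FF_eq, ne_eq, ZMod.intCast_zmod_eq_zero_iff_dvd]
  rfl

lemma cf_frob {N : ℕ} (e : ℕ) (F : MvPolynomial (Fin N) ℤ) (b : Fin N → ℕ) :
    ((cf (MvPolynomial.psum (Fin N) ℤ 1 ^ (3 ^ e) * F) b : ℤ) : ZMod 3) =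
      ((cf (MvPolynomial.psum (Fin N) ℤ (3 ^ e) * F) b : ℤ) : ZMod 3) := by
  have key : ∀ G : MvPolynomial (Fin N) ℤ, ((cf G b : ℤ) : ZMod 3) =
      MvPolynomial.coeff (Finsupp.equivFunOnFinite.symm b) (MvPolynomial.map (Int.castRingHom (ZMod 3)) G) := by
    intro G
    rw [MvPolynomial.coeff_map]
    rfl
  rw [key, key]
  congr 1
  rw [map_mul, map_mul, map_pow]
  congr 1
  simp only [MvPolynomial.psum, map_sum, map_pow, MvPolynomial.map_X, pow_one]
  have : Fact (Nat.Prime 3) := ⟨Nat.prime_three⟩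
  rw [sum_pow_char_pow]

lemma cf_frob' {N : ℕ} (e : ℕ) (F G : MvPolynomial (Fin N) ℤ)
    (h : ∀ b, ((cf F b : ℤ) : ZMod 3) = ((cf G b : ℤ) : ZMod 3)) (b : Fin N → ℕ) :
    ((cf (MvPolynomial.psum (Fin N) ℤ (3 ^ e) * F) b : ℤ) : ZMod 3) =
      ((cf (MvPolynomial.psum (Fin N) ℤ (3 ^ e) * G) b : ℤ) : ZMod 3) := by
  rw [cf_psum_mul, cf_psum_mul]
  push_cast
  refine Finset.sum_congr rfl fun i _ => ?_
  split_ifs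
  · exact h _
  · rfl

lemma TT_congr {N d : ℕ} {F G : MvPolynomial (Fin N) ℤ}
    (h : ∀ b, ((cf F b : ℤ) : ZMod 3) = ((cf G b : ℤ) : ZMod 3)) : TT F d = TT G d := by
  rw [TT, TT]
  simp only [h]

/-- The number of irreducible characters of degree prime to three. -/
def gg (n : ℕ) : ℕ := Nat.card (IrrCoprime 3 (Equiv.Perm (Fin n)))

lemma gg_rec1 (e r : ℕ) (hr : r < 3 ^ e) : gg (3 ^ e + r) = 3 ^ e * gg r := by
  have h1 := (card_SS (N := 2 * (3 ^ e + r)) (n := 3 ^ e + r) le_rfl).2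
  have h2 := (card_SS (N := 2 * (3 ^ e + r)) (n := r) (by omega)).2
  have h3 := (card_step1 hr (N := 2 * (3 ^ e + r)) le_rfl (FF_good _ r)).1
  rw [SS_eq] at h1 h2
  rw [TT_congr (G := MvPolynomial.psum _ ℤ (3 ^ e) * FF (2 * (3 ^ e + r)) r), h3, ← h2, ← mul_assoc] at h1
  · exact Nat.eq_of_mul_eq_mul_right (Nat.factorial_pos _) h1
  · intro b
    rw [FF, pow_add, mul_assoc]
    exact cf_frob e _ b

lemma gg_rec2 (e r : ℕ) (hr : r < 3 ^ e) : 2 * gg (2 * 3 ^ e + r) = 3 ^ e * (3 ^ e + 3) * gg r := by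
  have hq : 2 * 3 ^ e + r = 3 ^ e + (3 ^ e + r) := by ring
  rw [hq]
  have h1 := (card_SS (N := 2 * (3 ^ e + (3 ^ e + r))) (n := 3 ^ e + (3 ^ e + r)) le_rfl).2
  have h2 := (card_SS (N := 2 * (3 ^ e + (3 ^ e + r))) (n := r) (by omega)).2
  have h3 := (card_step2 hr (N := 2 * (3 ^ e + (3 ^ e + r))) le_rfl (FF_good _ r))
  rw [SS_eq] at h1 h2
  rw [TT_congr (G := MvPolynomial.psum _ ℤ (3 ^ e) * (MvPolynomial.psum _ ℤ (3 ^ e) * FF (2 * (3 ^ e + (3 ^ e + r))) r))] at h1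
  · rw [← h1, ← h2, ← mul_assoc, ← mul_assoc] at h3
    exact Nat.eq_of_mul_eq_mul_right (Nat.factorial_pos _) h3
  · intro b
    rw [FF, pow_add, mul_assoc, cf_frob]
    refine cf_frob' e _ _ (fun c => ?_) b
    rw [FF, pow_add, mul_assoc]
    exact cf_frob e _ c

lemma gg_zero : gg 0 = 1 := by
  have h1 := (card_SS (N := 0) (n := 0) le_rfl).2
  rw [Nat.factorial_zero, mul_one, SS_eq] at h1
  rw [gg, h1, Finset.card_eq_one]
  refine ⟨fun i => ((1 : Equiv.Perm (Fin 0)) i : ℕ), ?_⟩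
  rw [Finset.eq_singleton_iff_unique_mem]
  refine ⟨?_, fun b _ => Subsingleton.elim _ _⟩
  rw [mem_TT (FF_good 0 0), FF, pow_zero, one_mul, cf_vand]
  simp

lemma gg_mul (a e r : ℕ) (ha : a = 1 ∨ a = 2) (hr : r < 3 ^ e) :
    gg (a * 3 ^ e + r) = gg (a * 3 ^ e) * gg r := by
  have h0 : 0 < 3 ^ e := by positivity
  rcases ha with rfl | rfl
  · have h1 := gg_rec1 e r hr
    have h2 := gg_rec1 e 0 h0
    rw [gg_zero, mul_one, add_zero] at h2
    rw [one_mul, h1, h2]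
  · have h1 := gg_rec2 e r hr
    have h2 := gg_rec2 e 0 h0
    rw [gg_zero, mul_one, add_zero] at h2
    apply Nat.eq_of_mul_eq_mul_left (two_pos)
    rw [h1, ← mul_assoc, h2]

lemma adic_lt (t : ℕ) : ∀ (a e : Fin t → ℕ) (E : ℕ), (∀ i, a i = 1 ∨ a i = 2) → StrictAnti e →
    (∀ i, e i < E) → ∑ i, a i * 3 ^ e i < 3 ^ E := by
  induction t with
  | zero => intro a e E _ _ _; simp
  | succ t ih =>
    intro a e E ha he hE
    rw [Fin.sum_univ_succ]
    have h1 := ih (fun i => a i.succ) (fun i => e i.succ) (e 0) (fun i => ha _)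
      (fun i j h => he (Fin.succ_lt_succ_iff.mpr h)) (fun i => he (Fin.succ_pos i))
    have h2 : 3 ^ (e 0 + 1) ≤ 3 ^ E := Nat.pow_le_pow_right (by norm_num) (hE 0)
    rw [pow_succ] at h2
    have h3 : a 0 * 3 ^ e 0 ≤ 2 * 3 ^ e 0 := Nat.mul_le_mul_right _ (by have := ha 0; omega)
    omega

lemma gg_prod (t : ℕ) : ∀ (a e : Fin t → ℕ), (∀ i, a i = 1 ∨ a i = 2) → StrictAnti e →
    gg (∑ i, a i * 3 ^ e i) = ∏ i, gg (a i * 3 ^ e i) := by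
  induction t with
  | zero => intro a e _ _; simpa using gg_zero
  | succ t ih =>
    intro a e ha he
    rw [Fin.sum_univ_succ, Fin.prod_univ_succ]
    have hes : StrictAnti (fun i : Fin t => e i.succ) := fun i j h => he (Fin.succ_lt_succ_iff.mpr h)
    rw [gg_mul _ _ _ (ha 0) (adic_lt t (fun i => a i.succ) (fun i => e i.succ) (e 0) (fun i => ha _) hes
      (fun i => he (Fin.succ_pos i))), ih (fun i => a i.succ) (fun i => e i.succ) (fun i => ha _) hes]

/-- Let `n` be a positive integer with 3-adic expansion `n = Σ_k a k * 3 ^ (e k)`, where the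
exponents `e` are strictly decreasing and each digit `a k` lies in `{1, 2}`.  Then there is a
bijection between `Irr_{3'}(S_n)` and the product of the sets
`Irr_{3'}(S_{a k · 3 ^ (e k)})`. -/
theorem mckay_symm_adic_decomposition (n t : ℕ) (ht : 1 ≤ t) (hn : 0 < n)
    (a e : Fin t → ℕ) (ha : ∀ i, a i = 1 ∨ a i = 2) (he : StrictAnti e)
    (hsum : n = ∑ i, a i * 3 ^ e i) :
    Nonempty ((IrrCoprime 3 (Equiv.Perm (Fin n))) ≃
      (∀ i : Fin t, IrrCoprime 3 (Equiv.Perm (Fin (a i * 3 ^ e i))))) := by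
  have hfin : ∀ m, Finite (IrrCoprime 3 (Equiv.Perm (Fin m))) := fun m => (card_SS (N := 2 * m) (n := m) le_rfl).1
  have := hfin n
  have := fun i => hfin (a i * 3 ^ e i)
  apply Finite.card_eq.mp
  rw [Nat.card_pi]
  subst hsum
  exact gg_prod t a e ha he
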